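/- arXiv:1206.1531 — 2 statements merged into one kernel-verified Lean document; each statement's English description precedes it below -/
import Mathlib

section
/- Let ℓ be a fixed nonnegative integer. Suppose K_n ≥ 2 and P_n ≥ σ·n for some constant σ > 0 for all sufficiently large n, K_n/P_n = o(1), and p_e = (ln n + ℓ·ln ln n + β_{ℓ,n})/n with β_{ℓ,n} = o(ln n) and lim_{n→∞} β_{ℓ,n} = +∞. Fix ε ∈ (0,1), a constant λ ∈ (0,1/2) satisfying max(2λσ, λ·(e²/σ)^{λ/(1−2λ)}) < 1, and a constant μ ∈ (0,1/2) satisfying max(2·(√μ·(e/μ)^μ)^σ, √μ·(e/μ)^μ) < 1. Then P[(κ = ℓ) ∩ (δ > ℓ) ∩ (𝓔(J))^c] → 0 as n → ∞, where κ is the vertex connectivity and δ the minimum degree of 𝔾_on(n,K_n,P_n,p_n). -/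
open MeasureTheory Filter Asymptotics
open scoped ENNReal

noncomputable section

/-- Key rings: `K`-element subsets of a key pool of size `P`. -/
abbrev KeyRing (P K : ℕ) : Type := {s : Finset (Fin P) // s.card = K}

instance (P K : ℕ) : MeasurableSpace (KeyRing P K) := ⊤

/-- The uniform probability measure on key rings. -/
def uniformKeyMeasure (P K : ℕ) : Measure (KeyRing P K) :=
  (Fintype.card (KeyRing P K) : ℝ≥0∞)⁻¹ • (Measure.count : Measure (KeyRing P K))

/-- The Bernoulli measure with parameter `p` on `Bool`. -/
def bern (p : ℝ) : Measure Bool :=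
  ENNReal.ofReal p • Measure.dirac true + ENNReal.ofReal (1 - p) • Measure.dirac false

/-- Sample space underlying `𝔾_on(n, K, P, p)`: independent key rings for the `n`
nodes together with independent on/off channel states for each pair of nodes. -/
abbrev GonSpace (n K P : ℕ) : Type :=
  (Fin n → KeyRing P K) × (Sym2 (Fin n) → Bool)

/-- The probability measure of the model `𝔾_on(n, K, P, p)`: the key rings of the
`n` nodes are independent and uniform, and the channels are independent
Bernoulli(`p`) variables, independent of the key rings. -/
def gonMeasure (n K P : ℕ) (p : ℝ) : Measure (GonSpace n K P) :=
  (Measure.pi fun _ : Fin n => uniformKeyMeasure P K).prod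
    (Measure.pi fun _ : Sym2 (Fin n) => bern p)

/-- The random graph `𝔾_on`: an edge is present iff the key rings intersect and the
channel between the two nodes is on. -/
def gonGraph {n K P : ℕ} (ω : GonSpace n K P) : SimpleGraph (Fin n) where
  Adj i j := i ≠ j ∧ ((ω.1 i).1 ∩ (ω.1 j).1).Nonempty ∧ ω.2 s(i, j) = true
  symm := by
    refine ⟨?_⟩
    rintro i j ⟨h1, h2, h3⟩
    exact ⟨h1.symm, by rwa [Finset.inter_comm], by rwa [Sym2.eq_swap]⟩
  loopless := ⟨fun i h => h.1 rfl⟩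

/-- The random key graph `G(n, K, P)`: an edge is present iff the key rings intersect. -/
def rkgGraph {n K P : ℕ} (ω : Fin n → KeyRing P K) : SimpleGraph (Fin n) where
  Adj i j := i ≠ j ∧ ((ω i).1 ∩ (ω j).1).Nonempty
  symm := by
    refine ⟨?_⟩
    rintro i j ⟨h1, h2⟩
    exact ⟨h1.symm, by rwa [Finset.inter_comm]⟩
  loopless := ⟨fun i h => h.1 rfl⟩

/-- The probability measure of the random key graph model. -/
def rkgMeasure (n K P : ℕ) : Measure (Fin n → KeyRing P K) :=
  Measure.pi fun _ : Fin n => uniformKeyMeasure P K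

/-- Degree of a vertex. -/
def gDeg {V : Type*} (G : SimpleGraph V) (v : V) : ℕ := Nat.card {w // G.Adj v w}

/-- Minimum vertex degree. -/
def minDeg {V : Type*} (G : SimpleGraph V) : ℕ := sInf (Set.range (gDeg G))

/-- A graph is `k`-connected if it remains connected after the removal of any
`k - 1` of its vertices. -/
def KConnected {V : Type*} (G : SimpleGraph V) (k : ℕ) : Prop :=
  ∀ S : Finset V, S.card ≤ k - 1 → (G.induce ((S : Set V)ᶜ)).Connected

/-- Vertex connectivity: the least number of vertices whose deletion disconnects
the graph. -/
def vertexConn {V : Type*} (G : SimpleGraph V) : ℕ :=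
  sInf {m | ∃ S : Finset V, S.card = m ∧ ¬ (G.induce ((S : Set V)ᶜ)).Connected}

/-- `p_s`: the probability that two key rings share at least one key. -/
def psf (K P : ℕ) : ℝ :=
  if 2 * K ≤ P then 1 - (Nat.choose (P - K) K : ℝ) / (Nat.choose P K : ℝ) else 1

/-- `p_e = p · p_s`: the probability of an edge in `𝔾_on`. -/
def pef (K P : ℕ) (p : ℝ) : ℝ := p * psf K P

/-- The event `D_{x,ℓ}` that the node with index `x` has degree exactly `ℓ`. -/
def degEvent (n K P : ℕ) (x ℓ : ℕ) : Set (GonSpace n K P) :=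
  {ω | ∃ hx : x < n, gDeg (gonGraph ω) ⟨x, hx⟩ = ℓ}

/-- The event `E_{xy}` that the edge between the nodes with indices `x`, `y` is present. -/
def edgeEvent (n K P : ℕ) (x y : ℕ) : Set (GonSpace n K P) :=
  {ω | ∃ (hx : x < n) (hy : y < n), (gonGraph ω).Adj ⟨x, hx⟩ ⟨y, hy⟩}

/-- The event that the key rings of nodes `x` and `y` share exactly `u` keys. -/
def interCardEvent (n K P : ℕ) (x y u : ℕ) : Set (GonSpace n K P) :=
  {ω | ∃ (hx : x < n) (hy : y < n), ((ω.1 ⟨x, hx⟩).1 ∩ (ω.1 ⟨y, hy⟩).1).card = u}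

/-- The event `K_{xy}` that the key rings of nodes `x` and `y` share at least one key. -/
def keyShareEvent (n K P : ℕ) (x y : ℕ) : Set (GonSpace n K P) :=
  {ω | ∃ (hx : x < n) (hy : y < n), ((ω.1 ⟨x, hx⟩).1 ∩ (ω.1 ⟨y, hy⟩).1).Nonempty}

/-- `r_n = min(⌊P/K⌋, ⌊n/2⌋)`. -/
def rn (n K P : ℕ) : ℕ := min (P / K) (n / 2)

/-- The threshold array `J`. -/
def Jarr (n K P : ℕ) (ε lam mu : ℝ) (i : ℕ) : ℕ :=
  if i ≤ rn n K P then max ⌊(1 + ε) * (K : ℝ)⌋₊ ⌊lam * (K : ℝ) * (i : ℝ)⌋₊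
  else ⌊mu * (P : ℝ)⌋₊

/-- The event `𝓔(J)`: some set `T` of at least two nodes has a union of key rings of
size at most `J_{|T|}`. -/
def EJ (n K P : ℕ) (ε lam mu : ℝ) : Set (GonSpace n K P) :=
  {ω | ∃ T : Finset (Fin n), 2 ≤ T.card ∧
    (T.biUnion fun i => (ω.1 i).1).card ≤ Jarr n K P ε lam mu T.card}

/-!
Let `S` be a separating set with `#S = κ = ℓ`, and let `T` be a component of its complement with
`#T ≤ n / 2`. Since `ℓ < δ`, `T` has at least two vertices, and since `S` is a minimum cut, every
vertex of `S` has a neighbour in `T`. So the graph contains a tree on `T ∪ S` with leaves `S`, and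
no vertex outside `T ∪ S` is joined to `T`. Averaging out the key rings from the leaves of the tree
upwards, its edges are present with probability at most `p_e ^ (#T + ℓ - 1)`. The other vertices
avoid `T` independently given the key rings in `T`. Off `𝓔(J)` these rings hold many keys, so that
each vertex avoids `T` with probability at most `exp (-(1 + ε / 24) p_e)`, and for large `T` with
probability at most `max (exp (-λ p_e #T / 8)) (exp (-μ K / 2))`.

Put `x = n p_e → ∞`; then `n ≤ exp x` and `√(σ x) ≤ K`. In the union bound over trees, each bounded
size `#T` contributes a power of `x` times `exp (-ε x / 24)`, and the larger sizes together
contribute at most `exp (-x)`.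
-/

open Finset Topology
open scoped BigOperators

section Averages

variable {ι α : Type*} [Fintype ι] [DecidableEq ι] [Fintype α]

theorem expect_pi_eq_expect_update (F : (ι → α) → ℝ) (v : ι) :
    𝔼 θ, F θ = 𝔼 θ : ι → α, 𝔼 x, F (Function.update θ v x) := by
  have swap : ∑ q : (ι → α) × α, F (Function.update q.1 v q.2) = ∑ q : (ι → α) × α, F q.1 := by
    refine sum_nbij' (fun q => (Function.update q.1 v q.2, q.1 v))
      (fun q => (Function.update q.1 v q.2, q.1 v)) ?_ ?_ ?_ ?_ ?_ <;> simp
  rcases isEmpty_or_nonempty α with hα | hα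
  · have : IsEmpty (ι → α) := ⟨fun θ => hα.elim (θ v)⟩
    simp
  · rw [Fintype.sum_prod_type, Fintype.sum_prod_type] at swap
    simp only [Fintype.expect_eq_sum_div_card, ← sum_div, swap, sum_const, card_univ,
      nsmul_eq_mul]
    have : (Fintype.card α : ℝ) ≠ 0 := Nat.cast_ne_zero.2 Fintype.card_ne_zero
    rw [← mul_sum]
    field_simp

theorem expect_mul_le_of_update {F h : (ι → α) → ℝ} {v : ι} {c : ℝ} (hF : ∀ θ, 0 ≤ F θ)
    (hFv : ∀ θ x, F (Function.update θ v x) = F θ)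
    (hh : ∀ θ, F θ ≠ 0 → 𝔼 x, h (Function.update θ v x) ≤ c) :
    𝔼 θ, F θ * h θ ≤ c * 𝔼 θ, F θ := by
  rw [expect_pi_eq_expect_update _ v, mul_expect]
  refine expect_le_expect fun θ _ => ?_
  simp only [hFv, ← mul_expect]
  rcases eq_or_ne (F θ) 0 with h0 | h0
  · simp [h0]
  · rw [mul_comm]
    exact mul_le_mul_of_nonneg_right (hh θ h0) (hF θ)

/-- The coordinates in `D` are averaged out one at a time, in order of decreasing `d`. -/
theorem expect_mul_prod_le_pow_card_mul {F : (ι → α) → ℝ} {g : ι → (ι → α) → ℝ} {d : ι → ℕ}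
    {c : ℝ} (hc : 0 ≤ c) (hF : ∀ θ, 0 ≤ F θ) (hg : ∀ v θ, 0 ≤ g v θ) (D : Finset ι)
    (hFD : ∀ v ∈ D, ∀ θ x, F (Function.update θ v x) = F θ)
    (hgD : ∀ v ∈ D, ∀ w ∈ D, w ≠ v → d w ≤ d v → ∀ θ x, g w (Function.update θ v x) = g w θ)
    (hgc : ∀ v ∈ D, ∀ θ, F θ ≠ 0 → 𝔼 x, g v (Function.update θ v x) ≤ c) :
    𝔼 θ, F θ * ∏ v ∈ D, g v θ ≤ c ^ #D * 𝔼 θ, F θ := by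
  induction D using Finset.induction_on_max_value d with
  | empty => simp
  | insert a D haD hmax ih =>
    have peel : 𝔼 θ, (F θ * ∏ v ∈ D, g v θ) * g a θ ≤ c * 𝔼 θ, F θ * ∏ v ∈ D, g v θ := by
      refine expect_mul_le_of_update (v := a)
        (fun θ => mul_nonneg (hF θ) (prod_nonneg fun v _ => hg v θ)) (fun θ x => ?_)
        fun θ hθ => hgc a (mem_insert_self a D) θ (left_ne_zero_of_mul hθ)
      rw [hFD a (mem_insert_self a D)]
      exact congrArg _ (prod_congr rfl fun w hw =>
        hgD a (mem_insert_self a D) w (mem_insert_of_mem hw) (ne_of_mem_of_not_mem hw haD)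
          (hmax w hw) θ x)
    have rest := ih (fun v hv => hFD v (mem_insert_of_mem hv))
      (fun v hv w hw => hgD v (mem_insert_of_mem hv) w (mem_insert_of_mem hw))
      (fun v hv => hgc v (mem_insert_of_mem hv))
    calc 𝔼 θ, F θ * ∏ v ∈ insert a D, g v θ = 𝔼 θ, (F θ * ∏ v ∈ D, g v θ) * g a θ := by
          simp only [prod_insert haD, mul_comm (g a _), mul_assoc]
      _ ≤ c * (c ^ #D * 𝔼 θ, F θ) := peel.trans (mul_le_mul_of_nonneg_left rest hc)
      _ = c ^ #(insert a D) * 𝔼 θ, F θ := by rw [card_insert_of_notMem haD]; ring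

end Averages

section Measures

instance isFiniteMeasure_uniformKeyMeasure (P K : ℕ) : IsFiniteMeasure (uniformKeyMeasure P K) := by
  unfold uniformKeyMeasure
  rcases isEmpty_or_nonempty (KeyRing P K) with _ | _
  · rw [Measure.eq_zero_of_isEmpty (_ • _ : Measure (KeyRing P K))]
    infer_instance
  · exact Measure.smul_finite _ (ENNReal.inv_ne_top.2 (by exact_mod_cast Fintype.card_ne_zero))

instance isFiniteMeasure_bern (p : ℝ) : IsFiniteMeasure (bern p) := by
  have := Measure.smul_finite (Measure.dirac true) (ENNReal.ofReal_ne_top (r := p))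
  have := Measure.smul_finite (Measure.dirac false) (ENNReal.ofReal_ne_top (r := 1 - p))
  unfold bern
  infer_instance

instance isFiniteMeasure_gonMeasure (n K P : ℕ) (p : ℝ) : IsFiniteMeasure (gonMeasure n K P p) := by
  unfold gonMeasure
  infer_instance

theorem pi_uniformKeyMeasure_singleton {n K P : ℕ} (θ : Fin n → KeyRing P K) :
    (Measure.pi fun _ : Fin n => uniformKeyMeasure P K).real {θ} =
      (Fintype.card (Fin n → KeyRing P K) : ℝ)⁻¹ := by
  rw [measureReal_def, Measure.pi_singleton]
  simp [uniformKeyMeasure]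

theorem gonMeasure_real_eq_expect {n K P : ℕ} (p : ℝ) (E : Set (GonSpace n K P)) :
    (gonMeasure n K P p).real E =
      𝔼 θ, (Measure.pi fun _ : Sym2 (Fin n) => bern p).real (Prod.mk θ ⁻¹' E) := by
  rw [measureReal_def, gonMeasure, Measure.prod_apply .of_discrete, lintegral_fintype,
    ENNReal.toReal_sum fun _ _ => ENNReal.mul_ne_top (measure_ne_top _ _) (measure_ne_top _ _),
    Fintype.expect_eq_sum_div_card, sum_div]
  refine sum_congr rfl fun θ _ => ?_
  rw [ENNReal.toReal_mul, div_eq_mul_inv, ← pi_uniformKeyMeasure_singleton θ]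
  rfl

theorem bern_real {p : ℝ} (hp0 : 0 ≤ p) (hp1 : p ≤ 1) (B : Set Bool) :
    (bern p).real B = B.indicator 1 true * p + B.indicator 1 false * (1 - p) := by
  rw [measureReal_def, bern, Measure.add_apply, Measure.smul_apply, Measure.smul_apply]
  by_cases ht : true ∈ B <;> by_cases hf : false ∈ B <;>
    simp [ht, hf, hp0, sub_nonneg.2 hp1, ENNReal.toReal_add]

theorem pi_bern_real_open_closed {ι : Type*} [Fintype ι] {p : ℝ} (hp0 : 0 ≤ p) (hp1 : p ≤ 1)
    (E : Set ι) {F M : Finset ι} (hFM : Disjoint F M) :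
    (Measure.pi fun _ : ι => bern p).real
      {c | (∀ e ∈ F, e ∈ E ∧ c e = true) ∧ ∀ e ∈ M, ¬ (e ∈ E ∧ c e = true)} =
    (∏ e ∈ F, p * E.indicator 1 e) * ∏ e ∈ M, (1 - p * E.indicator 1 e) := by
  classical
  have hset : {c : ι → Bool | (∀ e ∈ F, e ∈ E ∧ c e = true) ∧ ∀ e ∈ M, ¬ (e ∈ E ∧ c e = true)} =
      Set.pi Set.univ fun e => {b : Bool | (e ∈ F → e ∈ E ∧ b = true) ∧
        (e ∈ M → ¬ (e ∈ E ∧ b = true))} := by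
    ext c
    simp only [Set.mem_ofPred_eq, Set.mem_pi, Set.mem_univ, true_implies, forall_and]
  rw [hset, measureReal_def, Measure.pi_pi, ENNReal.toReal_prod]
  simp only [← measureReal_def, bern_real hp0 hp1]
  rw [← prod_subset (subset_univ (F ∪ M)), prod_union hFM]
  · congr 1 <;> refine prod_congr rfl fun e he => ?_
    · have := disjoint_left.1 hFM he
      by_cases hE : e ∈ E <;> simp [he, this, hE]
    · have := disjoint_right.1 hFM he
      by_cases hE : e ∈ E <;> simp [he, this, hE]
  · intro e _ he
    simp only [mem_union, not_or] at he
    simp [he.1, he.2]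

end Measures

section KeyRings

variable {P K : ℕ}

/-- The probability `C(P - u, K) / C(P, K)` that a uniform key ring avoids `u` given keys. -/
def avoidProb (P K u : ℕ) : ℝ := ((P - u).choose K : ℝ) / (P.choose K : ℝ)

theorem avoidProb_antitone (P K : ℕ) : Antitone (avoidProb P K) := fun u w huw => by
  unfold avoidProb
  gcongr

theorem avoidProb_nonneg (P K u : ℕ) : 0 ≤ avoidProb P K u := by
  unfold avoidProb
  positivity

theorem descFactorial_mul_pow_le {m P : ℕ} (hm : m ≤ P) (K : ℕ) :
    m.descFactorial K * P ^ K ≤ m ^ K * P.descFactorial K := by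
  induction K with
  | zero => simp
  | succ K ih =>
    rw [Nat.descFactorial_succ, Nat.descFactorial_succ, pow_succ, pow_succ]
    have h : (m - K) * P ≤ m * (P - K) := by
      rw [Nat.sub_mul, Nat.mul_sub, mul_comm m K]
      exact Nat.sub_le_sub_left (Nat.mul_le_mul_left K hm) _
    calc (m - K) * m.descFactorial K * (P ^ K * P)
        = (m - K) * P * (m.descFactorial K * P ^ K) := by ring
      _ ≤ m * (P - K) * (m ^ K * P.descFactorial K) := Nat.mul_le_mul h ih
      _ = m ^ K * m * ((P - K) * P.descFactorial K) := by ring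

theorem choose_mul_pow_le {m P : ℕ} (hm : m ≤ P) (K : ℕ) :
    m.choose K * P ^ K ≤ m ^ K * P.choose K := by
  refine Nat.le_of_mul_le_mul_left ?_ K.factorial_pos
  have h := descFactorial_mul_pow_le hm K
  rw [Nat.descFactorial_eq_factorial_mul_choose, Nat.descFactorial_eq_factorial_mul_choose] at h
  linarith

theorem avoidProb_le_exp (hKP : K ≤ P) {u : ℕ} (hu : u ≤ P) :
    avoidProb P K u ≤ Real.exp (-(u * K / P)) := by
  rcases P.eq_zero_or_pos with rfl | hP
  · obtain rfl : K = 0 := by omega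
    simp [avoidProb]
  have hP' : (0 : ℝ) < P := Nat.cast_pos.2 hP
  have ratio : ((P - u : ℕ) : ℝ) / P ≤ Real.exp (-(u / P)) := by
    rw [Nat.cast_sub hu, sub_div, div_self hP'.ne']
    linarith [Real.add_one_le_exp (-((u : ℝ) / P))]
  calc avoidProb P K u ≤ (((P - u : ℕ) : ℝ) / P) ^ K := by
        rw [avoidProb, div_pow, div_le_div_iff₀ (Nat.cast_pos.2 (Nat.choose_pos hKP))
          (pow_pos hP' K)]
        exact_mod_cast choose_mul_pow_le (Nat.sub_le P u) K
    _ ≤ Real.exp (-(u / P)) ^ K := by gcongr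
    _ = Real.exp (-(u * K / P)) := by rw [← Real.exp_nat_mul]; congr 1; ring

theorem choose_succ_le_choose_sub_add (n k u : ℕ) :
    (n + 1).choose (k + 1) ≤ (n + 1 - u).choose (k + 1) + u * n.choose k := by
  induction u with
  | zero => simp
  | succ u ih =>
    refine ih.trans ?_
    rcases Nat.eq_zero_or_pos (n + 1 - u) with h | h
    · rw [h, Nat.choose_zero_succ, Nat.succ_mul]
      omega
    · obtain ⟨m, hm⟩ : ∃ m, n + 1 - u = m + 1 := ⟨n + 1 - u - 1, by omega⟩
      have hmn : m.choose k ≤ n.choose k := Nat.choose_le_choose k (by omega)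
      rw [hm, show n + 1 - (u + 1) = m by omega, Nat.choose_succ_succ', Nat.succ_mul]
      omega

theorem one_sub_le_avoidProb (hKP : K ≤ P) (u : ℕ) : 1 - u * K / P ≤ avoidProb P K u := by
  rcases K with _ | k
  · simp [avoidProb]
  obtain ⟨n, rfl⟩ : ∃ n, P = n + 1 := ⟨P - 1, by omega⟩
  have hpos : (0 : ℝ) < (n + 1).choose (k + 1) := Nat.cast_pos.2 (Nat.choose_pos hKP)
  have hid : ((n : ℝ) + 1) * n.choose k = (n + 1).choose (k + 1) * (k + 1) := by
    exact_mod_cast Nat.add_one_mul_choose_eq n k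
  have hle : ((n + 1).choose (k + 1) : ℝ) ≤ (n + 1 - u).choose (k + 1) + u * n.choose k := by
    exact_mod_cast choose_succ_le_choose_sub_add n k u
  have hshare : (u : ℝ) * (k + 1 : ℕ) / (n + 1 : ℕ) * (n + 1).choose (k + 1) = u * n.choose k := by
    push_cast
    field_simp
    linear_combination -(u : ℝ) * hid
  rw [avoidProb, le_div_iff₀ hpos]
  linarith

theorem psf_eq_one_sub_avoidProb (K P : ℕ) : psf K P = 1 - avoidProb P K K := by
  unfold psf avoidProb
  split_ifs with h
  · rfl
  · simp [Nat.choose_eq_zero_of_lt (show P - K < K by omega)]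

theorem psf_le_one (K P : ℕ) : psf K P ≤ 1 := by
  linarith [psf_eq_one_sub_avoidProb K P, avoidProb_nonneg P K K]

theorem psf_le_sq_div (hKP : K ≤ P) : psf K P ≤ (K : ℝ) * K / P := by
  linarith [psf_eq_one_sub_avoidProb K P, one_sub_le_avoidProb hKP K]

theorem one_sub_exp_le_psf (hKP : K ≤ P) : 1 - Real.exp (-((K : ℝ) * K / P)) ≤ psf K P := by
  linarith [psf_eq_one_sub_avoidProb K P, avoidProb_le_exp hKP hKP]

theorem avoidProb_le_one (P K u : ℕ) : avoidProb P K u ≤ 1 :=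
  div_le_one_of_le₀ (Nat.cast_le.2 (Nat.choose_le_choose K (P.sub_le u))) (Nat.cast_nonneg _)

theorem psf_nonneg (K P : ℕ) : 0 ≤ psf K P := by
  linarith [psf_eq_one_sub_avoidProb K P, avoidProb_le_one P K K]

theorem pef_nonneg {p : ℝ} (hp0 : 0 ≤ p) (K P : ℕ) : 0 ≤ pef K P p :=
  mul_nonneg hp0 (psf_nonneg K P)

theorem pef_le_one {p : ℝ} (hp1 : p ≤ 1) (K P : ℕ) : pef K P p ≤ 1 :=
  mul_le_one₀ hp1 (psf_nonneg K P) (psf_le_one K P)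

theorem expect_disjoint_eq_avoidProb (P K : ℕ) (U : Finset (Fin P)) :
    𝔼 x : KeyRing P K, (if Disjoint x.1 U then (1 : ℝ) else 0) = avoidProb P K #U := by
  have h : (univ.filter fun x : KeyRing P K => Disjoint x.1 U).map
      (Function.Embedding.subtype _) = powersetCard K Uᶜ := by
    ext s
    simp only [Finset.mem_map, mem_filter, mem_univ, true_and, Function.Embedding.subtype_apply,
      mem_powersetCard, subset_compl_iff_disjoint_right]
    exact ⟨by rintro ⟨x, hx, rfl⟩; exact ⟨hx, x.2⟩, fun ⟨h1, h2⟩ => ⟨⟨s, h2⟩, h1, rfl⟩⟩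
  rw [Fintype.expect_eq_sum_div_card, sum_boole, ← card_map, h, card_powersetCard, card_compl,
    Fintype.card_fin, avoidProb]
  simp

/-- The `0`-`1` indicator that two key rings share a key. -/
def shareInd (x y : KeyRing P K) : ℝ := if Disjoint x.1 y.1 then 0 else 1

theorem shareInd_nonneg (x y : KeyRing P K) : 0 ≤ shareInd x y := by
  unfold shareInd
  split_ifs <;> norm_num

theorem shareInd_le_one (x y : KeyRing P K) : shareInd x y ≤ 1 := by
  unfold shareInd
  split_ifs <;> norm_num

theorem shareInd_eq_one_sub (x y : KeyRing P K) :
    shareInd x y = 1 - if Disjoint x.1 y.1 then 1 else 0 := by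
  unfold shareInd
  split_ifs <;> norm_num

theorem one_sub_mul_shareInd_nonneg {p : ℝ} (hp : p ≤ 1) (x y : KeyRing P K) :
    0 ≤ 1 - p * shareInd x y := by
  nlinarith [shareInd_nonneg x y, shareInd_le_one x y]

theorem expect_shareInd (y : KeyRing P K) : 𝔼 x, shareInd x y = psf K P := by
  have : Nonempty (KeyRing P K) := ⟨y⟩
  simp only [shareInd_eq_one_sub, expect_sub_distrib, expect_disjoint_eq_avoidProb, y.2,
    Fintype.expect_const, psf_eq_one_sub_avoidProb]

end KeyRings

section CutTrees

variable {V : Type*}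

/-- `f` is the parent map of a tree on `T ∪ S` with root in `T` and every vertex of `S` a leaf.
Acyclicity is expressed by a rank that decreases along `f`, and `f` is the identity where there is
no parent, so that the tree determines `f`. -/
structure IsParentMap [DecidableEq V] (T S : Finset V) (root : V) (f : V → V) : Prop where
  disjoint : Disjoint T S
  root_mem : root ∈ T
  parent_mem : ∀ v ∈ (T ∪ S).erase root, f v ∈ T
  exists_rank : ∃ d : V → ℕ, ∀ v ∈ (T ∪ S).erase root, d (f v) < d v
  eq_self : ∀ v ∉ (T ∪ S).erase root, f v = v

/-- The graph `G` contains the edges of the tree with parent map `f` on `T ∪ S`, and `S` separates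
`T` from the other vertices. -/
def ContainsCutTree [DecidableEq V] (G : SimpleGraph V) (T S : Finset V) (root : V) (f : V → V) :
    Prop :=
  (∀ v ∈ (T ∪ S).erase root, G.Adj v (f v)) ∧ ∀ v ∉ T ∪ S, ∀ t ∈ T, ¬ G.Adj v t

/-- The graph `G` without the edges that meet `S`. The vertices of `S` are kept, as isolated
vertices, to avoid a change of vertex type. -/
def isolateVerts (G : SimpleGraph V) (S : Finset V) : SimpleGraph V where
  Adj a b := G.Adj a b ∧ a ∉ S ∧ b ∉ S
  symm := ⟨fun _ _ h => ⟨h.1.symm, h.2.2, h.2.1⟩⟩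
  loopless := ⟨fun _ h => h.1.ne rfl⟩

theorem reachable_mem_of_closed {H : SimpleGraph V} {A : Set V} {u v : V} (h : H.Reachable u v)
    (hA : ∀ a ∈ A, ∀ b, H.Adj a b → b ∈ A) (hu : u ∈ A) : v ∈ A := by
  obtain ⟨w⟩ := h
  induction w with
  | nil => exact hu
  | cons hadj _ ih => exact ih (hA _ hu _ hadj)

theorem exists_adj_dist_lt {H : SimpleGraph V} {u v : V} (h : H.Reachable v u) (hne : v ≠ u) :
    ∃ w, H.Adj v w ∧ H.Reachable w u ∧ H.dist w u < H.dist v u := by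
  obtain ⟨walk, hlen⟩ := h.exists_walk_length_eq_dist
  cases walk with
  | nil => exact absurd rfl hne
  | cons hadj tail =>
    refine ⟨_, hadj, ⟨tail⟩, ?_⟩
    rw [← hlen, SimpleGraph.Walk.length_cons]
    exact Nat.lt_succ_of_le (SimpleGraph.dist_le tail)

theorem exists_card_eq_vertexConn [Finite V] (G : SimpleGraph V) :
    ∃ S : Finset V, #S = vertexConn G ∧ ¬ (G.induce ((S : Set V)ᶜ)).Connected := by
  cases nonempty_fintype V
  refine Nat.sInf_mem (s := {m | ∃ S : Finset V, #S = m ∧ ¬ (G.induce ((S : Set V)ᶜ)).Connected})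
    ⟨_, univ, rfl, fun h => ?_⟩
  obtain ⟨⟨x, hx⟩⟩ := h.nonempty
  simp at hx

theorem connected_of_card_lt_vertexConn {G : SimpleGraph V} {S : Finset V}
    (hS : #S < vertexConn G) : (G.induce ((S : Set V)ᶜ)).Connected := by
  by_contra h
  exact hS.not_ge (Nat.sInf_le ⟨S, rfl, h⟩)

theorem reachable_induce_of_reachable_isolateVerts {G : SimpleGraph V} {S : Finset V}
    {u v : ↥((S : Set V)ᶜ)} (h : (isolateVerts G S).Reachable u v) :
    (G.induce ((S : Set V)ᶜ)).Reachable u v := by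
  have closed := reachable_mem_of_closed h
    (A := {a | ∃ ha : a ∈ (S : Set V)ᶜ, (G.induce ((S : Set V)ᶜ)).Reachable u ⟨a, ha⟩})
    (fun a ⟨ha, hreach⟩ b hab => ⟨hab.2.2, hreach.trans (SimpleGraph.Adj.reachable hab.1)⟩)
    ⟨u.2, .rfl⟩
  exact closed.2

theorem exists_small_component [Fintype V] {G : SimpleGraph V} {S : Finset V}
    (hS : ¬ (G.induce ((S : Set V)ᶜ)).Connected) (hcard : #S < Fintype.card V) :
    ∃ u ∉ S, ∃ T : Finset V, (∀ v, v ∈ T ↔ (isolateVerts G S).Reachable v u) ∧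
      2 * #T ≤ Fintype.card V := by
  classical
  obtain ⟨x, hx⟩ : ∃ x, x ∉ S := by
    by_contra! h
    exact hcard.ne (by rw [eq_univ_of_forall h, card_univ])
  have : Nonempty ↥((S : Set V)ᶜ) := ⟨⟨x, hx⟩⟩
  obtain ⟨u, v, huv⟩ : ∃ u v : ↥((S : Set V)ᶜ), ¬ (isolateVerts G S).Reachable u v := by
    by_contra! h
    exact hS ⟨fun u v => reachable_induce_of_reachable_isolateVerts (h u v)⟩
  let component (w : V) : Finset V := univ.filter fun a => (isolateVerts G S).Reachable a w
  have hmem (w a : V) : a ∈ component w ↔ (isolateVerts G S).Reachable a w := by simp [component]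
  have hdisj : Disjoint (component u) (component v) := disjoint_left.2 fun a hau hav =>
    huv (((hmem u a).1 hau).symm.trans ((hmem v a).1 hav))
  have hsum : #(component u) + #(component v) ≤ Fintype.card V := by
    rw [← card_union_of_disjoint hdisj]
    exact card_le_univ _
  rcases le_total #(component u) #(component v) with h | h
  · exact ⟨u, u.2, component u, hmem u, by omega⟩
  · exact ⟨v, v.2, component v, hmem v, by omega⟩

section Component

variable {G : SimpleGraph V} {S T : Finset V} {u : V}
  (hT : ∀ v, v ∈ T ↔ (isolateVerts G S).Reachable v u) (hu : u ∉ S)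

include hT hu

theorem disjoint_of_component : Disjoint T S := disjoint_left.2 fun v hv =>
  reachable_mem_of_closed ((hT v).1 hv).symm (A := {a | a ∉ S}) (fun _ _ _ h => h.2.2) hu

theorem mem_component_of_adj {t v : V} (ht : t ∈ T) (hv : v ∉ S) (hadj : G.Adj t v) : v ∈ T :=
  (hT v).2 (SimpleGraph.Reachable.trans (SimpleGraph.Adj.reachable
    ⟨hadj.symm, hv, disjoint_left.1 (disjoint_of_component hT hu) ht⟩) ((hT t).1 ht))

theorem exists_adj_component_of_mem (hS : #S = vertexConn G) {s : V} (hs : s ∈ S) :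
    ∃ t ∈ T, G.Adj s t := by
  classical
  by_contra! h
  have hconn : (G.induce (((S.erase s : Finset V) : Set V)ᶜ)).Connected :=
    connected_of_card_lt_vertexConn (hS ▸ card_erase_lt_of_mem hs)
  have hmem := reachable_mem_of_closed
    (hconn.preconnected ⟨u, fun hus => hu (mem_of_mem_erase hus)⟩ ⟨s, by simp⟩)
    (A := {a : ↥(((S.erase s : Finset V) : Set V)ᶜ) | a.1 ∈ T}) ?_ ((hT u).2 .rfl)
  · exact disjoint_left.1 (disjoint_of_component hT hu) hmem hs
  · rintro ⟨a, _⟩ (haT : a ∈ T) ⟨b, hb⟩ (hab : G.Adj a b)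
    have hbs : b ≠ s := by
      rintro rfl
      exact h a haT hab.symm
    exact mem_component_of_adj hT hu haT (fun hbS => hb (mem_erase.2 ⟨hbs, hbS⟩)) hab

theorem two_le_card_component [Finite V] (hdeg : #S < minDeg G) : 2 ≤ #T := by
  classical
  cases nonempty_fintype V
  have hdegu : minDeg G ≤ gDeg G u := Nat.sInf_le ⟨u, rfl⟩
  have hdegT : gDeg G u ≤ #((S ∪ T).erase u) := by
    rw [gDeg, Nat.card_eq_fintype_card, Fintype.card_subtype]
    refine card_le_card fun w hw => ?_
    have hadj : G.Adj u w := by simpa using hw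
    refine mem_erase.2 ⟨hadj.ne', mem_union.2 (or_iff_not_imp_left.2 fun hwS => ?_)⟩
    exact mem_component_of_adj hT hu ((hT u).2 .rfl) hwS hadj
  have hcard := card_erase_of_mem (mem_union_right S ((hT u).2 .rfl))
  have := card_union_le S T
  omega

theorem exists_isParentMap_of_component [Finite V] [DecidableEq V] (hS : #S = vertexConn G) :
    ∃ f, IsParentMap T S u f ∧ ContainsCutTree G T S u f := by
  cases nonempty_fintype V
  have hTS := disjoint_of_component hT hu
  have huT : u ∈ T := (hT u).2 .rfl
  let dist (v : V) : ℕ := (isolateVerts G S).dist v u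
  let rank (v : V) : ℕ := if v ∈ T then dist v else 1 + ∑ w, dist w
  have hparent : ∀ v ∈ (T ∪ S).erase u, ∃ w ∈ T, rank w < rank v ∧ G.Adj v w := by
    intro v hv
    obtain ⟨hvu, hvTS⟩ := mem_erase.1 hv
    rcases mem_union.1 hvTS with hvT | hvS
    · obtain ⟨w, hadj, hwu, hlt⟩ := exists_adj_dist_lt ((hT v).1 hvT) hvu
      have hwT := (hT w).2 hwu
      exact ⟨w, hwT, by simpa only [rank, if_pos hwT, if_pos hvT] using hlt, hadj.1⟩
    · obtain ⟨w, hwT, hadj⟩ := exists_adj_component_of_mem hT hu hS hvS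
      refine ⟨w, hwT, ?_, hadj⟩
      have := single_le_sum (f := dist) (fun _ _ => Nat.zero_le _) (mem_univ w)
      simp only [rank, if_pos hwT, if_neg (disjoint_right.1 hTS hvS)]
      omega
  choose! f hfT hrank hadj using hparent
  let f' (v : V) : V := if v ∈ (T ∪ S).erase u then f v else v
  have hf' : ∀ v ∈ (T ∪ S).erase u, f' v = f v := fun v hv => if_pos hv
  refine ⟨f', ⟨hTS, huT, fun v hv => hf' v hv ▸ hfT v hv,
    ⟨rank, fun v hv => hf' v hv ▸ hrank v hv⟩, fun v hv => if_neg hv⟩,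
    fun v hv => hf' v hv ▸ hadj v hv, fun v hv t ht hvt => ?_⟩
  rw [mem_union, not_or] at hv
  exact hv.1 (mem_component_of_adj hT hu ht hv.2 hvt.symm)

end Component

theorem exists_containsCutTree [Fintype V] [DecidableEq V] {G : SimpleGraph V}
    (hdeg : vertexConn G < minDeg G) (hcard : vertexConn G < Fintype.card V) :
    ∃ T S root f, #S = vertexConn G ∧ 2 ≤ #T ∧ 2 * #T ≤ Fintype.card V ∧
      IsParentMap T S root f ∧ ContainsCutTree G T S root f := by
  obtain ⟨S, hS, hdisc⟩ := exists_card_eq_vertexConn G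
  obtain ⟨u, hu, T, hT, hTcard⟩ := exists_small_component hdisc (hS ▸ hcard)
  obtain ⟨f, hf, hG⟩ := exists_isParentMap_of_component hT hu hS
  exact ⟨T, S, u, f, hS, two_le_card_component hT hu (hS ▸ hdeg), hTcard, hf, hG⟩

open scoped Classical in
/-- The tuples `(T, S, root, f)` in which `f` is a parent map, `#T = r` and `#S = l`. -/
def parentMaps (V : Type*) [Fintype V] (r l : ℕ) :
    Finset (Finset V × Finset V × V × (V → V)) :=
  univ.filter fun q => #q.1 = r ∧ #q.2.1 = l ∧ IsParentMap q.1 q.2.1 q.2.2.1 q.2.2.2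

theorem mem_parentMaps [Fintype V] [DecidableEq V] {r l : ℕ} {T S : Finset V} {root : V}
    {f : V → V} :
    (T, S, root, f) ∈ parentMaps V r l ↔ #T = r ∧ #S = l ∧ IsParentMap T S root f := by
  simp only [parentMaps, mem_filter, mem_univ, true_and]
  convert Iff.rfl

theorem IsParentMap.mem_piFinset [Fintype V] [DecidableEq V] {T S : Finset V} {root : V}
    {f : V → V} (h : IsParentMap T S root f) :
    f ∈ Fintype.piFinset fun v => if v ∈ T ∪ S then T else {v} := by
  refine Fintype.mem_piFinset.2 fun v => ?_
  by_cases hv : v ∈ (T ∪ S).erase root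
  · rw [if_pos (mem_of_mem_erase hv)]
    exact h.parent_mem v hv
  · rw [h.eq_self v hv]
    split_ifs with hvTS
    · obtain rfl : v = root := by
        by_contra hne
        exact hv (mem_erase.2 ⟨hne, hvTS⟩)
      exact h.root_mem
    · exact mem_singleton_self v

theorem card_piFinset_ite_singleton [Fintype V] [DecidableEq V] (T U : Finset V) :
    #(Fintype.piFinset fun v => if v ∈ U then T else {v}) = #T ^ #U := by
  simp only [Fintype.card_piFinset, apply_ite card, card_singleton, prod_ite_mem, univ_inter,
    prod_const]

theorem card_parentMaps_le [Fintype V] (r l : ℕ) :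
    #(parentMaps V r l) ≤
      (Fintype.card V).choose r * (Fintype.card V).choose l * (r * r ^ (r + l)) := by
  classical
  let maps (T S : Finset V) : Finset (V → V) :=
    Fintype.piFinset fun v => if v ∈ T ∪ S then T else {v}
  have hsub : parentMaps V r l ⊆ (powersetCard r univ ×ˢ powersetCard l univ).biUnion fun q =>
      (q.1 ×ˢ maps q.1 q.2).image fun p => (q.1, q.2, p.1, p.2) := by
    rintro ⟨T, S, root, f⟩ hq
    obtain ⟨hTr, hSl, hf⟩ := mem_parentMaps.1 hq
    exact mem_biUnion.2 ⟨(T, S), by simp [hTr, hSl], mem_image.2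
      ⟨(root, f), mem_product.2 ⟨hf.root_mem, hf.mem_piFinset⟩, rfl⟩⟩
  refine (card_le_card hsub).trans ((card_biUnion_le_card_mul _ _ (r * r ^ (r + l)) ?_).trans ?_)
  · rintro ⟨T, S⟩ hTS
    simp only [mem_product, mem_powersetCard_univ] at hTS
    obtain ⟨rfl, rfl⟩ := hTS
    rw [card_image_of_injective _ fun p q h => by simpa [Prod.ext_iff] using h, card_product,
      card_piFinset_ite_singleton]
    rcases T.eq_empty_or_nonempty with rfl | hT
    · simp
    · exact Nat.mul_le_mul_left _ (Nat.pow_le_pow_right hT.card_pos (card_union_le T S))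
  · rw [card_product, card_powersetCard, card_powersetCard, card_univ]

end CutTrees

section CutTreeProbability

variable {n K P : ℕ}

theorem gonGraph_adj_iff {ω : GonSpace n K P} {v w : Fin n} :
    (gonGraph ω).Adj v w ↔ s(v, w) ∈ (rkgGraph ω.1).edgeSet ∧ ω.2 s(v, w) = true := by
  simp only [gonGraph, rkgGraph, SimpleGraph.mem_edgeSet, and_assoc]

theorem indicator_edgeSet_rkgGraph (θ : Fin n → KeyRing P K) {v w : Fin n} (hvw : v ≠ w) :
    (rkgGraph θ).edgeSet.indicator (1 : Sym2 (Fin n) → ℝ) s(v, w) = shareInd (θ v) (θ w) := by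
  simp [Set.indicator, rkgGraph, SimpleGraph.mem_edgeSet, shareInd, hvw,
    ← not_disjoint_iff_nonempty_inter, ite_not]

section Pairs

variable {V : Type*} [DecidableEq V] {T S : Finset V} {root : V} {f : V → V}

theorem IsParentMap.ne_parent (h : IsParentMap T S root f) {v : V}
    (hv : v ∈ (T ∪ S).erase root) : v ≠ f v := fun hfv => by
  obtain ⟨d, hd⟩ := h.exists_rank
  exact (hd v hv).ne (congrArg d hfv.symm)

theorem IsParentMap.injOn_parentEdge (h : IsParentMap T S root f) :
    Set.InjOn (fun v => s(v, f v)) ((T ∪ S).erase root : Finset V) := by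
  obtain ⟨d, hd⟩ := h.exists_rank
  intro v hv w hw hvw
  rcases Sym2.eq_iff.1 hvw with ⟨hvw, _⟩ | ⟨hvfw, hfvw⟩
  · exact hvw
  · have hdv := hd v hv
    have hdw := hd w hw
    rw [hfvw] at hdv
    rw [← hvfw] at hdw
    exact absurd hdv hdw.not_gt

theorem injOn_crossPairs [Fintype V] :
    Set.InjOn (fun q : V × V => s(q.1, q.2)) ((T ∪ S)ᶜ ×ˢ T : Finset (V × V)) := by
  rintro ⟨v, t⟩ hvt ⟨w, u⟩ hwu h
  simp only [coe_product, Set.mem_prod, mem_coe, mem_compl, mem_union, not_or] at hvt hwu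
  rcases Sym2.eq_iff.1 h with ⟨hvw, htu⟩ | ⟨hvu, _⟩
  · exact Prod.ext hvw htu
  · obtain rfl : v = u := hvu
    exact absurd hwu.2 hvt.1.1

theorem IsParentMap.disjoint_parentEdges_crossPairs [Fintype V] (h : IsParentMap T S root f) :
    Disjoint (((T ∪ S).erase root).image fun v => s(v, f v))
      (((T ∪ S)ᶜ ×ˢ T).image fun q : V × V => s(q.1, q.2)) := by
  simp only [disjoint_left, mem_image, mem_product, mem_compl]
  rintro _ ⟨v, hv, rfl⟩ ⟨⟨w, t⟩, ⟨hw, _⟩, hwt⟩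
  rcases Sym2.eq_iff.1 hwt with ⟨hwv, _⟩ | ⟨hwfv, _⟩
  · obtain rfl : w = v := hwv
    exact hw (mem_of_mem_erase hv)
  · obtain rfl : w = f v := hwfv
    exact hw (mem_union_left S (h.parent_mem v hv))

end Pairs

variable {p : ℝ} {T S : Finset (Fin n)} {root : Fin n} {f : Fin n → Fin n}

theorem pi_bern_real_containsCutTree (hp0 : 0 ≤ p) (hp1 : p ≤ 1) (hf : IsParentMap T S root f)
    (θ : Fin n → KeyRing P K) :
    (Measure.pi fun _ : Sym2 (Fin n) => bern p).real
      {c | ContainsCutTree (gonGraph (θ, c)) T S root f} =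
    (∏ v ∈ (T ∪ S).erase root, p * shareInd (θ v) (θ (f v))) *
      ∏ v ∈ (T ∪ S)ᶜ, ∏ t ∈ T, (1 - p * shareInd (θ v) (θ t)) := by
  have law := pi_bern_real_open_closed hp0 hp1 (rkgGraph θ).edgeSet
    hf.disjoint_parentEdges_crossPairs
  rw [prod_image hf.injOn_parentEdge, prod_image injOn_crossPairs, prod_product] at law
  convert law using 2
  · ext c
    simp only [ContainsCutTree, gonGraph_adj_iff, Set.mem_ofPred_eq, forall_mem_image,
      mem_product, Prod.forall, and_imp, mem_compl]
    exact and_congr_right fun _ =>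
      ⟨fun h v t hv ht => h v hv t ht, fun h v hv t ht => h v t hv ht⟩
  · exact prod_congr rfl fun v hv => by
      rw [indicator_edgeSet_rkgGraph θ (hf.ne_parent hv)]
  · refine prod_congr rfl fun v hv => prod_congr rfl fun t ht => ?_
    have hvt : v ≠ t := by
      rintro rfl
      exact mem_compl.1 hv (mem_union_left S ht)
    rw [indicator_edgeSet_rkgGraph θ hvt]

/-- The conditional probability, given the key rings `θ`, that a further vertex has no edge to
the vertices in `T`. -/
def isolationProb (p : ℝ) (T : Finset (Fin n)) (θ : Fin n → KeyRing P K) : ℝ :=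
  𝔼 x, ∏ t ∈ T, (1 - p * shareInd x (θ t))

theorem expect_prod_parent_le (hp0 : 0 ≤ p) (hf : IsParentMap T S root f) :
    𝔼 θ : Fin n → KeyRing P K, ∏ v ∈ (T ∪ S).erase root, p * shareInd (θ v) (θ (f v)) ≤
      pef K P p ^ (#T + #S - 1) := by
  obtain ⟨d, hd⟩ := hf.exists_rank
  have key := expect_mul_prod_le_pow_card_mul (F := 1) (d := d)
    (g := fun v (θ : Fin n → KeyRing P K) => p * shareInd (θ v) (θ (f v)))
    (pef_nonneg hp0 K P) (fun _ => zero_le_one)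
    (fun _ _ => mul_nonneg hp0 (shareInd_nonneg _ _)) ((T ∪ S).erase root) (fun _ _ _ _ => rfl)
    (fun v hv w hw hwv hdwv θ x => ?_) (fun v hv θ _ => ?_)
  · have hcard : #((T ∪ S).erase root) = #T + #S - 1 := by
      rw [card_erase_of_mem (mem_union_left S hf.root_mem), card_union_of_disjoint hf.disjoint]
    simp only [Pi.one_apply, one_mul, hcard] at key
    refine key.trans (mul_le_of_le_one_right
      (pow_nonneg (pef_nonneg hp0 K P) _) ?_)
    rcases isEmpty_or_nonempty (Fin n → KeyRing P K) with _ | _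
    · simp
    · exact (Fintype.expect_const 1).le
  · have hfw : f w ≠ v := by
      rintro rfl
      exact (hd w hw).not_ge hdwv
    rw [Function.update_of_ne hwv, Function.update_of_ne hfw]
  · simp only [Function.update_self, Function.update_of_ne (hf.ne_parent hv).symm, ← mul_expect,
      expect_shareInd, pef, le_refl]

theorem expect_mul_prod_no_edge_le (hp1 : p ≤ 1) {R : Finset (Fin n)} (hRT : Disjoint R T)
    {F : (Fin n → KeyRing P K) → ℝ} {b : ℝ} (hb0 : 0 ≤ b) (hF : ∀ θ, 0 ≤ F θ)
    (hFR : ∀ v ∈ R, ∀ θ x, F (Function.update θ v x) = F θ)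
    (hb : ∀ θ, F θ ≠ 0 → isolationProb p T θ ≤ b) :
    𝔼 θ, F θ * ∏ v ∈ R, ∏ t ∈ T, (1 - p * shareInd (θ v) (θ t)) ≤ b ^ #R * 𝔼 θ, F θ := by
  have hT {v t} (hv : v ∈ R) (ht : t ∈ T) : t ≠ v := fun h => disjoint_left.1 hRT hv (h ▸ ht)
  refine expect_mul_prod_le_pow_card_mul (d := fun _ => 0) hb0 hF
    (fun v θ => prod_nonneg fun t _ => one_sub_mul_shareInd_nonneg hp1 _ _) R hFR
    (fun v hv w _ hwv _ θ x => prod_congr rfl fun t ht => ?_) fun v hv θ hθ => ?_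
  · rw [Function.update_of_ne hwv, Function.update_of_ne (hT hv ht)]
  · refine le_of_eq_of_le (expect_congr rfl fun x _ => prod_congr rfl fun t ht => ?_) (hb θ hθ)
    rw [Function.update_self, Function.update_of_ne (hT hv ht)]

theorem gonMeasure_real_containsCutTree_le (hp0 : 0 ≤ p) (hp1 : p ≤ 1)
    (hf : IsParentMap T S root f) {Q : (Fin n → KeyRing P K) → Prop} {b : ℝ} (hb0 : 0 ≤ b)
    (hQ : ∀ v ∉ T, ∀ θ x, Q (Function.update θ v x) ↔ Q θ)
    (hb : ∀ θ, Q θ → isolationProb p T θ ≤ b) :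
    (gonMeasure n K P p).real {ω | Q ω.1 ∧ ContainsCutTree (gonGraph ω) T S root f} ≤
      pef K P p ^ (#T + #S - 1) * b ^ (n - #T - #S) := by
  classical
  let A (θ : Fin n → KeyRing P K) : ℝ :=
    ∏ v ∈ (T ∪ S).erase root, p * shareInd (θ v) (θ (f v))
  let F (θ : Fin n → KeyRing P K) : ℝ := if Q θ then A θ else 0
  have hA0 (θ) : 0 ≤ A θ := prod_nonneg fun _ _ => mul_nonneg hp0 (shareInd_nonneg _ _)
  have hFA (θ) : F θ ≤ A θ := by
    simp only [F]
    split_ifs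
    exacts [le_rfl, hA0 θ]
  have hA {v} (hv : v ∈ (T ∪ S)ᶜ) (θ x) : A (Function.update θ v x) = A θ := by
    have hvTS {w} (hw : w ∈ T ∪ S) : w ≠ v := fun h => mem_compl.1 hv (h ▸ hw)
    refine prod_congr rfl fun w hw => ?_
    rw [Function.update_of_ne (hvTS (mem_of_mem_erase hw)),
      Function.update_of_ne (hvTS (mem_union_left S (hf.parent_mem w hw)))]
  have hcard : #(T ∪ S)ᶜ = n - #T - #S := by
    rw [card_compl, card_union_of_disjoint hf.disjoint, Fintype.card_fin, Nat.sub_sub]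
  calc (gonMeasure n K P p).real {ω | Q ω.1 ∧ ContainsCutTree (gonGraph ω) T S root f}
      = 𝔼 θ, F θ * ∏ v ∈ (T ∪ S)ᶜ, ∏ t ∈ T, (1 - p * shareInd (θ v) (θ t)) := by
        rw [gonMeasure_real_eq_expect]
        refine expect_congr rfl fun θ _ => ?_
        by_cases hθ : Q θ
        · simp only [F, if_pos hθ, A, ← pi_bern_real_containsCutTree hp0 hp1 hf θ]
          simp [Set.preimage, hθ]
        · simp [Set.preimage, F, hθ]
    _ ≤ b ^ #(T ∪ S)ᶜ * 𝔼 θ, F θ := by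
        refine expect_mul_prod_no_edge_le hp1 (disjoint_compl_left.mono_right subset_union_left)
          hb0 (fun θ => ite_nonneg (hA0 θ) le_rfl) (fun v hv θ x => ?_) fun θ hθ => ?_
        · simp only [F, hA hv, hQ v fun h => mem_compl.1 hv (mem_union_left S h)]
        · exact hb θ (of_not_not fun h => hθ (if_neg h))
    _ ≤ b ^ #(T ∪ S)ᶜ * pef K P p ^ (#T + #S - 1) := by
        gcongr
        exact (expect_le_expect fun θ _ => hFA θ).trans (expect_prod_parent_le hp0 hf)
    _ = pef K P p ^ (#T + #S - 1) * b ^ (n - #T - #S) := by rw [hcard, mul_comm]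

end CutTreeProbability

section Isolation

variable {n K P : ℕ}

/-- Every subset `B` of `T` with at least two vertices holds more than `J #B` keys: the
complement of the event `𝓔(J)`, localised to the subsets of `T`. -/
def GoodRings (J : ℕ → ℕ) (T : Finset (Fin n)) (θ : Fin n → KeyRing P K) : Prop :=
  ∀ B ⊆ T, 2 ≤ #B → J #B < #(B.biUnion fun i => (θ i).1)

theorem goodRings_update_iff {J : ℕ → ℕ} {T : Finset (Fin n)} {v : Fin n} (hv : v ∉ T)
    (θ : Fin n → KeyRing P K) (x : KeyRing P K) :
    GoodRings J T (Function.update θ v x) ↔ GoodRings J T θ := by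
  refine forall₂_congr fun B hB => ?_
  have unchanged : ∀ i ∈ B, (Function.update θ v x i).1 = (θ i).1 := fun i hi => by
    rw [Function.update_of_ne (ne_of_mem_of_not_mem (hB hi) hv)]
  rw [biUnion_congr rfl unchanged]

theorem card_biUnion_keyRing_le (B : Finset (Fin n)) (θ : Fin n → KeyRing P K) :
    #(B.biUnion fun i => (θ i).1) ≤ P :=
  card_finset_fin_le _

variable {p : ℝ} {T : Finset (Fin n)}

theorem isolationProb_anti (hp0 : 0 ≤ p) (hp1 : p ≤ 1) {B : Finset (Fin n)} (hBT : B ⊆ T)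
    (θ : Fin n → KeyRing P K) : isolationProb p T θ ≤ isolationProb p B θ :=
  expect_le_expect fun _ _ => prod_le_prod_of_subset_of_le_one hBT
    (fun _ _ => one_sub_mul_shareInd_nonneg hp1 _ _)
    fun _ _ _ => sub_le_self 1 (mul_nonneg hp0 (shareInd_nonneg _ _))

theorem isolationProb_eq_sum_powerset (p : ℝ) (T : Finset (Fin n)) (θ : Fin n → KeyRing P K) :
    isolationProb p T θ = ∑ B ∈ T.powerset,
      p ^ #B * (1 - p) ^ (#T - #B) * avoidProb P K #(B.biUnion fun i => (θ i).1) := by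
  have expand (x : KeyRing P K) : ∏ t ∈ T, (1 - p * shareInd x (θ t)) = ∑ B ∈ T.powerset,
      p ^ #B * (1 - p) ^ (#T - #B) *
        (if Disjoint x.1 (B.biUnion fun i => (θ i).1) then 1 else 0) := by
    have split (t) : 1 - p * shareInd x (θ t) =
        p * (if Disjoint x.1 (θ t).1 then 1 else 0) + (1 - p) := by
      rw [shareInd_eq_one_sub]
      ring
    simp only [split, prod_add, prod_mul_distrib, prod_const, prod_ite_zero,
      disjoint_biUnion_right]
    refine sum_congr rfl fun B hB => ?_
    rw [card_sdiff_of_subset (mem_powerset.1 hB), one_pow]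
    ring
  simp only [isolationProb, expand, expect_sum_comm, ← mul_expect, expect_disjoint_eq_avoidProb]

theorem isolationProb_pair {a c : Fin n} (hac : a ≠ c) (θ : Fin n → KeyRing P K) :
    isolationProb p {a, c} θ = 1 - 2 * (p * psf K P) +
      p ^ 2 * (2 * psf K P - 1 + avoidProb P K #((θ a).1 ∪ (θ c).1)) := by
  have h0 : avoidProb P K 0 = 1 := by
    have : (P.choose K : ℝ) ≠ 0 := by
      have h := card_le_univ (θ a).1
      rw [(θ a).2, Fintype.card_fin] at h
      exact_mod_cast (Nat.choose_pos h).ne'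
    simpa [avoidProb] using div_self this
  rw [isolationProb_eq_sum_powerset, card_pair hac, sum_powerset_insert (by simpa using hac),
    ← insert_empty_eq c, sum_powerset_insert (notMem_empty c),
    sum_powerset_insert (notMem_empty c), psf_eq_one_sub_avoidProb]
  simp only [powerset_empty, sum_singleton, card_empty, pow_zero, tsub_zero, one_mul,
    biUnion_empty, h0, mul_one, biUnion_insert, insert_empty_eq, card_singleton, pow_one,
    Nat.add_one_sub_one, union_empty, (θ c).2, (θ a).2, card_pair hac, tsub_self]
  ring

theorem isolationProb_le_of_avoidProb_le (hp0 : 0 ≤ p) (hp1 : p ≤ 1) {θ : Fin n → KeyRing P K}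
    {a η : ℝ} (h : ∀ B ⊆ T, avoidProb P K #(B.biUnion fun i => (θ i).1) ≤ a ^ #B + η) :
    isolationProb p T θ ≤ (p * a + (1 - p)) ^ #T + η := by
  have binomial (c : ℝ) : ∑ B ∈ T.powerset, p ^ #B * (1 - p) ^ (#T - #B) * c ^ #B =
      (p * c + (1 - p)) ^ #T := by
    rw [← sum_pow_mul_eq_add_pow]
    exact sum_congr rfl fun B _ => by ring
  have total := binomial 1
  simp only [one_pow, mul_one, add_sub_cancel] at total
  calc isolationProb p T θ
      ≤ ∑ B ∈ T.powerset, p ^ #B * (1 - p) ^ (#T - #B) * (a ^ #B + η) := by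
        rw [isolationProb_eq_sum_powerset]
        exact sum_le_sum fun B hB => mul_le_mul_of_nonneg_left (h B (mem_powerset.1 hB))
          (mul_nonneg (pow_nonneg hp0 _) (pow_nonneg (sub_nonneg.2 hp1) _))
    _ = (p * a + (1 - p)) ^ #T + η := by
        simp only [mul_add, sum_add_distrib, ← sum_mul, binomial, total, one_mul]

variable {ε lam mu : ℝ} {θ : Fin n → KeyRing P K}

theorem avoidProb_biUnion_le_of_goodRings (hK : 0 < K) (hKP : K ≤ P) (hl1 : lam ≤ 1)
    (hθ : GoodRings (Jarr n K P ε lam mu) T θ) {B : Finset (Fin n)} (hBT : B ⊆ T) :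
    avoidProb P K #(B.biUnion fun i => (θ i).1) ≤ Real.exp (-(lam * (K * K / P))) ^ #B +
      if #T ≤ rn n K P then 0 else Real.exp (-(mu * K)) := by
  have hP : (0 : ℝ) < P := Nat.cast_pos.2 (hK.trans_le hKP)
  set u := #(B.biUnion fun i => (θ i).1) with hu
  have avoid := avoidProb_le_exp hKP (card_biUnion_keyRing_le B θ)
  have of_linear (h : lam * K * #B ≤ u) :
      avoidProb P K u ≤ Real.exp (-(lam * (K * K / P))) ^ #B +
        if #T ≤ rn n K P then 0 else Real.exp (-(mu * K)) := by
    refine le_add_of_le_of_nonneg (avoid.trans ?_) (by split_ifs <;> positivity)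
    rw [← Real.exp_nat_mul, Real.exp_le_exp, mul_neg, neg_le_neg_iff]
    calc #B * (lam * (K * K / P)) = lam * K * #B * K / P := by ring
      _ ≤ u * K / P := by gcongr
  obtain hB | hB | hB : #B = 0 ∨ #B = 1 ∨ 2 ≤ #B := by omega
  · exact of_linear (by simp [hB])
  · obtain ⟨a, rfl⟩ := card_eq_one.1 hB
    refine of_linear ?_
    rw [hu, singleton_biUnion, (θ a).2, hB, Nat.cast_one, mul_one]
    exact mul_le_of_le_one_left K.cast_nonneg hl1
  · have hJ := hθ B hBT hB
    rw [← hu, Jarr] at hJ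
    split_ifs at hJ with hr
    · exact of_linear (Nat.lt_of_floor_lt ((le_max_right _ _).trans_lt hJ)).le
    · rw [if_neg fun h => hr ((card_le_card hBT).trans h)]
      refine le_add_of_nonneg_of_le (by positivity) (avoid.trans (Real.exp_le_exp.2 ?_))
      rw [neg_le_neg_iff, le_div_iff₀ hP, mul_right_comm]
      gcongr
      exact (Nat.lt_of_floor_lt hJ).le

theorem exp_neg_le_one_sub_half {z : ℝ} (h0 : 0 ≤ z) (h1 : z ≤ 1) :
    Real.exp (-z) ≤ 1 - z / 2 := by
  rw [Real.exp_neg]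
  refine inv_le_of_inv_le₀ (by linarith) ?_
  rw [inv_le_iff_one_le_mul₀ (by linarith)]
  nlinarith [Real.add_one_le_exp z]

theorem half_mul_psf_le_one_sub_exp (hKP : K ≤ P) (hl0 : 0 ≤ lam) (hl1 : lam ≤ 1) :
    lam / 2 * psf K P ≤ 1 - Real.exp (-(lam * (K * K / P))) := by
  have hz := exp_neg_le_one_sub_half (mul_nonneg hl0 (psf_nonneg K P))
    (mul_le_one₀ hl1 (psf_nonneg K P) (psf_le_one K P))
  have mono : Real.exp (-(lam * (K * K / P))) ≤ Real.exp (-(lam * psf K P)) := by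
    rw [Real.exp_le_exp, neg_le_neg_iff]
    exact mul_le_mul_of_nonneg_left (psf_le_sq_div hKP) hl0
  linarith

theorem isolationProb_le_of_goodRings (hp0 : 0 ≤ p) (hp1 : p ≤ 1) (hK : 0 < K) (hKP : K ≤ P)
    (hl0 : 0 ≤ lam) (hl1 : lam ≤ 1) (hθ : GoodRings (Jarr n K P ε lam mu) T θ) :
    isolationProb p T θ ≤ Real.exp (-(lam / 2 * pef K P p * #T)) +
      if #T ≤ rn n K P then 0 else Real.exp (-(mu * K)) := by
  set a := Real.exp (-(lam * (K * K / P)))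
  have single : p * a + (1 - p) ≤ Real.exp (-(lam / 2 * pef K P p)) := by
    have hexp := Real.add_one_le_exp (-(lam / 2 * (p * psf K P)))
    have hmul := mul_le_mul_of_nonneg_left (half_mul_psf_le_one_sub_exp hKP hl0 hl1) hp0
    rw [pef]
    linarith
  have : 0 ≤ p * a + (1 - p) := add_nonneg (by positivity) (sub_nonneg.2 hp1)
  calc isolationProb p T θ
      ≤ (p * a + (1 - p)) ^ #T + if #T ≤ rn n K P then 0 else Real.exp (-(mu * K)) :=
        isolationProb_le_of_avoidProb_le hp0 hp1 fun B hBT =>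
          avoidProb_biUnion_le_of_goodRings hK hKP hl1 hθ hBT
    _ ≤ Real.exp (-(lam / 2 * pef K P p)) ^ #T +
          if #T ≤ rn n K P then 0 else Real.exp (-(mu * K)) := by gcongr
    _ = _ := by rw [← Real.exp_nat_mul]; congr 2; ring

theorem isolationProb_le_of_ne (hp0 : 0 ≤ p) (hp1 : p ≤ 1) {a c : Fin n} (ha : a ∈ T)
    (hc : c ∈ T) (hac : a ≠ c) (θ : Fin n → KeyRing P K) :
    isolationProb p T θ ≤ 1 - 2 * (p * psf K P) +
      p ^ 2 * (2 * psf K P - 1 + avoidProb P K #((θ a).1 ∪ (θ c).1)) :=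
  (isolationProb_anti hp0 hp1 (insert_subset ha (singleton_subset_iff.2 hc)) θ).trans_eq
    (isolationProb_pair hac θ)

theorem one_sub_le_exp_neg_add_sq {z : ℝ} (h0 : 0 ≤ z) (h1 : z ≤ 1) :
    1 - z ≤ Real.exp (-(z + z ^ 2 / 2)) := by
  rcases h1.eq_or_lt with rfl | h1
  · simpa using (Real.exp_pos _).le
  · have hlog := sum_le_hasSum (range 2) (fun i _ => by positivity)
      (Real.hasSum_pow_div_log_of_abs_lt_one (by rwa [abs_of_nonneg h0]))
    rw [← Real.log_le_iff_le_exp (by linarith)]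
    simp only [sum_range_succ, sum_range_zero, Nat.cast_zero, Nat.cast_one] at hlog
    linarith

theorem pair_bound_le_of_small {p s y d ε : ℝ} (hp0 : 0 ≤ p) (hp1 : p ≤ 1) (hε0 : 0 ≤ ε)
    (hε1 : ε ≤ 1) (hs0 : 0 ≤ s) (hsy : s ≤ y) (hy : y ≤ ε / 6)
    (hd : d ≤ Real.exp (-((1 + ε) * y))) :
    1 - 2 * (p * s) + p ^ 2 * (2 * s - 1 + d) ≤ Real.exp (-((1 + ε / 2) * (p * s))) := by
  have hy0 : 0 ≤ y := hs0.trans hsy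
  set z := (1 + ε) * y with hz
  have hz0 : 0 ≤ z := by positivity
  have hexp : Real.exp (-z) ≤ 1 - (1 + ε / 2) * y := by
    rw [Real.exp_neg]
    refine inv_le_of_inv_le₀ (by nlinarith) ?_
    rw [inv_le_iff_one_le_mul₀ (by nlinarith)]
    have hz2 : (1 + ε / 2) * z ≤ ε / 2 := by
      rw [hz]
      nlinarith
    nlinarith [Real.add_one_le_exp z]
  have gain : 2 * s - 1 + d ≤ (1 - ε / 2) * s := by nlinarith
  have hp2 : p ^ 2 * ((1 - ε / 2) * s) ≤ p * ((1 - ε / 2) * s) :=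
    mul_le_mul_of_nonneg_right (by nlinarith) (mul_nonneg (by linarith) hs0)
  calc 1 - 2 * (p * s) + p ^ 2 * (2 * s - 1 + d)
      ≤ 1 - 2 * (p * s) + p ^ 2 * ((1 - ε / 2) * s) := by gcongr
    _ ≤ 1 - (1 + ε / 2) * (p * s) := by linarith
    _ ≤ Real.exp (-((1 + ε / 2) * (p * s))) := Real.one_sub_le_exp_neg _

theorem pair_bound_le_of_large {p s y d ε : ℝ} (hp0 : 0 ≤ p) (hp1 : p ≤ 1) (hε0 : 0 ≤ ε)
    (hε1 : ε ≤ 1) (hs0 : 0 ≤ s) (hs1 : s ≤ 1) (hys : 1 - Real.exp (-y) ≤ s) (hy : ε / 6 ≤ y)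
    (hd : d ≤ 1 - s) :
    1 - 2 * (p * s) + p ^ 2 * (2 * s - 1 + d) ≤ Real.exp (-((1 + ε / 24) * (p * s))) := by
  have hsε : ε / 12 ≤ s := by
    have h := exp_neg_le_one_sub_half (z := ε / 6) (by linarith) (by linarith)
    have h' : Real.exp (-y) ≤ Real.exp (-(ε / 6)) := Real.exp_le_exp.2 (by linarith)
    linarith
  have hps : 0 ≤ p * s := mul_nonneg hp0 hs0
  have : p * s ≤ p := mul_le_of_le_one_right hp0 hs1
  set z := (2 - p) * (p * s) with hz
  have hz0 : 0 ≤ z := mul_nonneg (by linarith) hps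
  have hz1 : z ≤ 1 := by nlinarith [sq_nonneg (1 - p)]
  have hz2 : (1 + s / 2) * (p * s) ≤ z + z ^ 2 / 2 := by
    have hq : -(1 - p) ≤ (2 - p) ^ 2 * p - 1 := by
      nlinarith [mul_nonneg (sub_nonneg.2 hp1) hp0,
        mul_nonneg (mul_nonneg (sub_nonneg.2 hp1) hp0) (by linarith : 0 ≤ 3 - p)]
    have hfactor : 1 + s / 2 ≤ (2 - p) + (2 - p) ^ 2 * p * s / 2 := by
      nlinarith [mul_le_mul_of_nonneg_right hq hs0]
    calc (1 + s / 2) * (p * s) ≤ ((2 - p) + (2 - p) ^ 2 * p * s / 2) * (p * s) := by gcongr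
      _ = z + z ^ 2 / 2 := by rw [hz]; ring
  calc 1 - 2 * (p * s) + p ^ 2 * (2 * s - 1 + d)
      ≤ 1 - 2 * (p * s) + p ^ 2 * (2 * s - 1 + (1 - s)) := by gcongr
    _ = 1 - z := by ring
    _ ≤ Real.exp (-(z + z ^ 2 / 2)) := one_sub_le_exp_neg_add_sq hz0 hz1
    _ ≤ Real.exp (-((1 + ε / 24) * (p * s))) := by
        rw [Real.exp_le_exp, neg_le_neg_iff]
        exact (mul_le_mul_of_nonneg_right (by linarith) hps).trans hz2

theorem isolationProb_le_exp_of_two_le_card (hp0 : 0 ≤ p) (hp1 : p ≤ 1) (hK : 0 < K)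
    (hKP : K ≤ P) (hn : 4 ≤ n) (hε0 : 0 ≤ ε) (hε1 : ε ≤ 1) (hT : 2 ≤ #T)
    (hθ : GoodRings (Jarr n K P ε lam mu) T θ) :
    isolationProb p T θ ≤ Real.exp (-((1 + ε / 24) * pef K P p)) := by
  have hP : (0 : ℝ) < P := Nat.cast_pos.2 (hK.trans_le hKP)
  obtain ⟨a, ha, c, hc, hac⟩ := one_lt_card.1 hT
  refine (isolationProb_le_of_ne hp0 hp1 ha hc hac θ).trans ?_
  set U := (θ a).1 ∪ (θ c).1 with hU
  -- For sparse key rings the gain over `exp (-p_e)` comes from the `(1 + ε) K` keys in `U`; for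
  -- dense ones `p_s` is bounded below, and it already appears in the second order term.
  rcases le_total ((K : ℝ) * K / P) (ε / 6) with hy | hy
  · have hKP2 : 2 * K ≤ P := by
      have hK1 : (1 : ℝ) ≤ K := Nat.one_le_cast.2 hK
      rw [div_le_iff₀ hP] at hy
      have : 2 * (K : ℝ) ≤ P := by nlinarith
      exact_mod_cast this
    have hJ := hθ {a, c} (insert_subset ha (singleton_subset_iff.2 hc)) (card_pair hac).ge
    have hrn : 2 ≤ rn n K P :=
      le_min ((Nat.le_div_iff_mul_le hK).2 hKP2) (by omega)
    rw [card_pair hac, biUnion_insert, singleton_biUnion, ← hU, Jarr, if_pos hrn] at hJ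
    have hUK : (1 + ε) * K ≤ #U := (Nat.lt_of_floor_lt ((le_max_left _ _).trans_lt hJ)).le
    have hd : avoidProb P K #U ≤ Real.exp (-((1 + ε) * (K * K / P))) := by
      refine (avoidProb_le_exp hKP (card_finset_fin_le U)).trans (Real.exp_le_exp.2 ?_)
      rw [neg_le_neg_iff, ← mul_div_assoc, ← mul_assoc]
      gcongr
    refine (pair_bound_le_of_small hp0 hp1 hε0 hε1 (psf_nonneg K P) (psf_le_sq_div hKP)
      hy hd).trans (Real.exp_le_exp.2 (neg_le_neg ?_))
    rw [pef]
    gcongr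
    · exact pef_nonneg hp0 K P
    · norm_num
  · refine pair_bound_le_of_large hp0 hp1 hε0 hε1 (psf_nonneg K P) (psf_le_one K P)
      (one_sub_exp_le_psf hKP) hy ?_
    rw [psf_eq_one_sub_avoidProb, sub_sub_cancel]
    refine avoidProb_antitone P K ?_
    rw [← (θ a).2]
    exact card_le_card subset_union_left

end Isolation

section UnionBound

variable {n K P ℓ : ℕ} {p ε lam mu : ℝ}

theorem goodRings_of_notMem_EJ {ω : GonSpace n K P} (hω : ω ∉ EJ n K P ε lam mu)
    (T : Finset (Fin n)) : GoodRings (Jarr n K P ε lam mu) T ω.1 :=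
  fun B _ hB => not_le.1 fun h => hω ⟨B, hB, h⟩

theorem vertexConn_eq_inter_lt_minDeg_subset (hℓn : ℓ < n) :
    {ω | vertexConn (gonGraph ω) = ℓ} ∩ {ω | ℓ < minDeg (gonGraph ω)} ∩
        (EJ n K P ε lam mu)ᶜ ⊆
      ⋃ r ∈ Icc 2 (n / 2), ⋃ q ∈ parentMaps (Fin n) r ℓ,
        {ω | GoodRings (Jarr n K P ε lam mu) q.1 ω.1 ∧
          ContainsCutTree (gonGraph ω) q.1 q.2.1 q.2.2.1 q.2.2.2} := by
  rintro ω ⟨⟨rfl, hdeg⟩, hE⟩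
  obtain ⟨T, S, root, f, hS, hT, hTn, hf, htree⟩ :=
    exists_containsCutTree hdeg (by rwa [Fintype.card_fin])
  rw [Fintype.card_fin] at hTn
  simp only [Set.mem_iUnion]
  exact ⟨#T, mem_Icc.2 ⟨hT, by omega⟩, (T, S, root, f), mem_parentMaps.2 ⟨rfl, hS, hf⟩,
    goodRings_of_notMem_EJ hE T, htree⟩

theorem gonMeasure_real_vertexConn_eq_le (hp0 : 0 ≤ p) (hp1 : p ≤ 1) (hℓn : ℓ < n) {b : ℕ → ℝ}
    (hb0 : ∀ r, 0 ≤ b r)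
    (hb : ∀ (T : Finset (Fin n)) (θ : Fin n → KeyRing P K), 2 ≤ #T → #T ≤ n / 2 →
      GoodRings (Jarr n K P ε lam mu) T θ → isolationProb p T θ ≤ b #T) :
    (gonMeasure n K P p).real ({ω | vertexConn (gonGraph ω) = ℓ} ∩
        {ω | ℓ < minDeg (gonGraph ω)} ∩ (EJ n K P ε lam mu)ᶜ) ≤
      ∑ r ∈ Icc 2 (n / 2), (n.choose r * n.choose ℓ * (r * r ^ (r + ℓ)) : ℝ) *
        (pef K P p ^ (r + ℓ - 1) * b r ^ (n - r - ℓ)) := by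
  refine (measureReal_mono (vertexConn_eq_inter_lt_minDeg_subset hℓn)
    (measure_ne_top _ _)).trans
    ((measureReal_biUnion_finset_le _ _).trans (sum_le_sum fun r hr => ?_))
  obtain ⟨hr2, hrn⟩ := mem_Icc.1 hr
  have bound : ∀ q ∈ parentMaps (Fin n) r ℓ, (gonMeasure n K P p).real
      {ω | GoodRings (Jarr n K P ε lam mu) q.1 ω.1 ∧
        ContainsCutTree (gonGraph ω) q.1 q.2.1 q.2.2.1 q.2.2.2} ≤
      pef K P p ^ (r + ℓ - 1) * b r ^ (n - r - ℓ) := by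
    rintro ⟨T, S, root, f⟩ hq
    obtain ⟨rfl, rfl, hf⟩ := mem_parentMaps.1 hq
    exact gonMeasure_real_containsCutTree_le hp0 hp1 hf (hb0 _)
      (fun v hv => goodRings_update_iff hv) fun θ hθ => hb T θ hr2 hrn hθ
  have hcard := card_parentMaps_le (V := Fin n) r ℓ
  rw [Fintype.card_fin] at hcard
  refine (measureReal_biUnion_finset_le _ _).trans ((sum_le_card_nsmul _ _ _ bound).trans ?_)
  rw [nsmul_eq_mul]
  refine mul_le_mul_of_nonneg_right (by exact_mod_cast hcard) ?_
  exact mul_nonneg (pow_nonneg (pef_nonneg hp0 K P) _) (pow_nonneg (hb0 r) _)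

end UnionBound

section Analysis

theorem exp_neg_add_le_max {x w : ℝ} (hw : 2 ≤ w) (hwx : Real.exp (-w) ≤ x / 4) :
    Real.exp (-x) + Real.exp (-w) ≤ max (Real.exp (-(x / 4))) (Real.exp (-(w / 2))) := by
  have hx0 : 0 < x := by linarith [Real.exp_pos (-w)]
  rcases le_total x 1 with hx | hx
  · refine le_max_of_le_left ?_
    linarith [exp_neg_le_one_sub_half hx0.le hx, Real.one_sub_le_exp_neg (x / 4)]
  · have split (u v : ℝ) : Real.exp (-u) = Real.exp (v - u) * Real.exp (-v) := by
      rw [← Real.exp_add]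
      congr 1
      ring
    have hx2 : 2 * Real.exp (-x) ≤ Real.exp (-(x / 4)) := by
      rw [split (x / 4) x]
      gcongr
      nlinarith [Real.quadratic_le_exp_of_nonneg (show 0 ≤ x - x / 4 by linarith)]
    have hw2 : 2 * Real.exp (-w) ≤ Real.exp (-(w / 2)) := by
      rw [split (w / 2) w]
      gcongr
      linarith [Real.add_one_le_exp (w - w / 2)]
    rcases le_total (Real.exp (-x)) (Real.exp (-w)) with h | h
    · exact le_max_of_le_right (by linarith)
    · exact le_max_of_le_left (by linarith)

/-- The growth rate of the number of cut trees: on `n` vertices there are at most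
`(treeCountBase ℓ * n) ^ (r + ℓ)` parent maps with `#T = r` and `#S = ℓ`. -/
def treeCountBase (ℓ : ℕ) : ℝ := Real.exp 1 * 2 ^ (ℓ + 1)

theorem one_le_treeCountBase (ℓ : ℕ) : 1 ≤ treeCountBase ℓ :=
  one_le_mul_of_one_le_of_one_le (Real.one_le_exp zero_le_one) (one_le_pow₀ one_le_two)

theorem choose_mul_choose_mul_pow_le {n r : ℕ} (ℓ : ℕ) {e : ℝ} (hx : 1 ≤ n * e) (hr : 1 ≤ r) :
    (n.choose r * n.choose ℓ * (r * r ^ (r + ℓ)) : ℝ) * e ^ (r + ℓ - 1) ≤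
      n * (treeCountBase ℓ * (n * e)) ^ (r + ℓ) := by
  have he0 : 0 ≤ e := (pos_of_mul_pos_right (one_pos.trans_le hx) n.cast_nonneg).le
  obtain ⟨m, hm⟩ : ∃ m, r + ℓ = m + 1 := ⟨r + ℓ - 1, by omega⟩
  have hchoose : (n.choose ℓ : ℝ) ≤ (n : ℝ) ^ ℓ := by exact_mod_cast Nat.choose_le_pow n ℓ
  have hfactorial : (r : ℝ) ^ r / r.factorial ≤ Real.exp 1 ^ r := by
    rw [← Real.exp_nat_mul, mul_one]
    exact Real.pow_div_factorial_le_exp _ r.cast_nonneg r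
  have htwo : (r : ℝ) ^ (ℓ + 1) ≤ (2 ^ (ℓ + 1)) ^ r := by
    rw [← pow_mul, mul_comm, pow_mul]
    exact pow_le_pow_left₀ r.cast_nonneg (by exact_mod_cast Nat.lt_two_pow_self.le) _
  calc (n.choose r * n.choose ℓ * (r * r ^ (r + ℓ)) : ℝ) * e ^ (r + ℓ - 1)
      ≤ (n ^ r / r.factorial * n ^ ℓ * (r * r ^ (r + ℓ))) * e ^ m := by
        rw [hm, Nat.add_sub_cancel]
        gcongr
        exact Nat.choose_le_pow_div r n
    _ = (n : ℝ) ^ (r + ℓ) * e ^ m * ((r : ℝ) ^ r / r.factorial * (r : ℝ) ^ (ℓ + 1)) := by ring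
    _ = n * (n * e) ^ m * ((r : ℝ) ^ r / r.factorial * (r : ℝ) ^ (ℓ + 1)) := by rw [hm]; ring
    _ ≤ n * (n * e) ^ (m + 1) * (Real.exp 1 ^ r * (2 ^ (ℓ + 1)) ^ r) := by
        gcongr
        exact m.le_succ
    _ ≤ n * (n * e) ^ (m + 1) * treeCountBase ℓ ^ (r + ℓ) := by
        rw [← mul_pow]
        gcongr
        exact pow_le_pow_right₀ (one_le_treeCountBase ℓ) (r.le_add_right ℓ)
    _ = n * (treeCountBase ℓ * (n * e)) ^ (r + ℓ) := by rw [hm, mul_pow]; ring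

theorem small_term_le {n r ℓ R : ℕ} {e A δ : ℝ} (hn : n ≤ Real.exp (n * e)) (hr : r ≤ R)
    (hA : 1 ≤ A) (he0 : 0 ≤ e) (he1 : e ≤ 1) (hδ0 : 0 ≤ δ) (hδ1 : δ ≤ 1) :
    n * A ^ (r + ℓ) * Real.exp (-((1 + δ) * e)) ^ (n - r - ℓ) ≤
      Real.exp (2 * (R + ℓ)) * (A ^ (R + ℓ) * Real.exp (-(δ * (n * e)))) := by
  have hδe : (1 + δ) * e ≤ 2 := by nlinarith
  have hm : (n : ℝ) - (R + ℓ) ≤ (n - r - ℓ : ℕ) := by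
    rw [sub_le_iff_le_add]
    exact_mod_cast (by omega : n ≤ n - r - ℓ + (R + ℓ))
  have hexp : n * Real.exp (-((1 + δ) * e)) ^ (n - r - ℓ) ≤
      Real.exp (2 * (R + ℓ)) * Real.exp (-(δ * (n * e))) := by
    rw [← Real.exp_nat_mul, ← Real.exp_add]
    refine (mul_le_mul_of_nonneg_right hn (Real.exp_pos _).le).trans ?_
    rw [← Real.exp_add, Real.exp_le_exp]
    have h1 := mul_le_mul_of_nonneg_right hm (by positivity : 0 ≤ (1 + δ) * e)
    have h2 := mul_le_mul_of_nonneg_right hδe (by positivity : 0 ≤ (R + ℓ : ℝ))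
    linarith
  calc n * A ^ (r + ℓ) * Real.exp (-((1 + δ) * e)) ^ (n - r - ℓ)
      = A ^ (r + ℓ) * (n * Real.exp (-((1 + δ) * e)) ^ (n - r - ℓ)) := by ring
    _ ≤ A ^ (R + ℓ) * (Real.exp (2 * (R + ℓ)) * Real.exp (-(δ * (n * e)))) := by gcongr
    _ = _ := by ring

theorem large_term_le {n r ℓ R : ℕ} {e A lam c : ℝ} (hn : n ≤ Real.exp (n * e)) (hr : R ≤ r)
    (hℓR : ℓ ≤ R) (hrn : r ≤ n / 2) (hn6 : 6 * ℓ ≤ n) (hA : 1 ≤ A) (he0 : 0 ≤ e) (he1 : e ≤ 1)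
    (hlam : 0 ≤ lam) (hR : 144 ≤ lam * R) (hAx : Real.log A ≤ lam / 96 * (n * e))
    (hAc : Real.log A + 3 ≤ c / 3) :
    n * A ^ (r + ℓ) * max (Real.exp (-(lam / 8 * e * r))) (Real.exp (-c)) ^ (n - r - ℓ) ≤
      Real.exp (-(2 * (n * e))) := by
  set d := min (lam / 8 * e * r) c
  have hmax : max (Real.exp (-(lam / 8 * e * r))) (Real.exp (-c)) = Real.exp (-d) := by
    rw [← Real.exp_monotone.map_max, max_neg_neg]
  have hlogA : 0 ≤ Real.log A := Real.log_nonneg hA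
  have hx0 : 0 ≤ n * e := by positivity
  have hd0 : 0 ≤ d := le_min (by positivity) (by linarith)
  have hm : (n : ℝ) / 3 ≤ (n - r - ℓ : ℕ) := by
    rw [div_le_iff₀ (by norm_num)]
    exact_mod_cast (by omega : n ≤ (n - r - ℓ) * 3)
  have exponent : (r + ℓ) * Real.log A + 3 * (n * e) ≤ n / 3 * d := by
    rcases min_choice (lam / 8 * e * r) c with h | h
    · have hrR : lam * R ≤ lam * r := mul_le_mul_of_nonneg_left (Nat.cast_le.2 hr) hlam
      have hℓr : (ℓ : ℝ) ≤ r := Nat.cast_le.2 (hℓR.trans hr)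
      have h1 : ((r : ℝ) + ℓ) * Real.log A ≤ (2 * r) * (lam / 96 * (n * e)) :=
        mul_le_mul (by linarith) hAx hlogA (by positivity)
      have h2 := mul_le_mul_of_nonneg_right (hR.trans hrR) hx0
      simp only [d, h]
      linarith
    · have hrℓ : (r : ℝ) + ℓ ≤ n := by exact_mod_cast (by omega : r + ℓ ≤ n)
      have h1 := mul_le_mul_of_nonneg_right hrℓ hlogA
      have h2 := mul_le_mul_of_nonneg_left hAc n.cast_nonneg (α := ℝ)
      have h3 := mul_le_of_le_one_right n.cast_nonneg he1 (α := ℝ)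
      simp only [d, h]
      linarith
  have hpow : A ^ (r + ℓ) = Real.exp ((r + ℓ) * Real.log A) := by
    rw [← Nat.cast_add, Real.exp_nat_mul, Real.exp_log (one_pos.trans_le hA)]
  calc n * A ^ (r + ℓ) * max (Real.exp (-(lam / 8 * e * r))) (Real.exp (-c)) ^ (n - r - ℓ)
      ≤ Real.exp (n * e) * Real.exp ((r + ℓ) * Real.log A) * Real.exp (-d) ^ (n - r - ℓ) := by
        rw [hmax, hpow]
        gcongr
    _ = Real.exp (n * e + (r + ℓ) * Real.log A + (n - r - ℓ : ℕ) * -d) := by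
        rw [← Real.exp_nat_mul, ← Real.exp_add, ← Real.exp_add]
    _ ≤ Real.exp (-(2 * (n * e))) := by
        rw [Real.exp_le_exp]
        linarith [mul_le_mul_of_nonneg_right hm hd0]

theorem eventually_log_mul_add_le_mul_sqrt {C c : ℝ} (a : ℝ) (hC : 0 < C) (hc : 0 < c) :
    ∀ᶠ x : ℝ in atTop, Real.log (C * x) + a ≤ c * √x := by
  have h1 : (fun x : ℝ => Real.log x + (Real.log C + a)) =o[atTop]
      fun x : ℝ => x ^ (1 / 2 : ℝ) := by
    refine (isLittleO_log_rpow_atTop (by norm_num)).add ?_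
    refine isLittleO_const_left.2 (Or.inr ?_)
    exact tendsto_norm_atTop_atTop.comp (tendsto_rpow_atTop (by norm_num))
  filter_upwards [h1.bound hc, eventually_gt_atTop 0] with x hx hx0
  rw [Real.log_mul hC.ne' hx0.ne', Real.sqrt_eq_rpow]
  rw [Real.norm_of_nonneg (Real.rpow_nonneg hx0.le _)] at hx
  linarith [le_trans (le_abs_self _) hx]

theorem tendsto_const_mul_pow_mul_exp_neg (a C : ℝ) (m : ℕ) {c : ℝ} (hc : 0 < c) :
    Tendsto (fun x : ℝ => a * ((C * x) ^ m * Real.exp (-(c * x)))) atTop (𝓝 0) := by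
  have h := (Real.tendsto_pow_mul_exp_neg_atTop_nhds_zero m).comp
    (tendsto_id.const_mul_atTop hc)
  have h' := h.const_mul (a * (C / c) ^ m)
  rw [mul_zero] at h'
  refine h'.congr fun x => ?_
  have hCx : (C * x) ^ m = (C / c) ^ m * (c * x) ^ m := by
    rw [← mul_pow]
    congr 1
    field_simp
  simp only [Function.comp_apply, id, hCx]
  ring

end Analysis

section Asymptotics

variable {n K P ℓ R : ℕ} {p ε lam mu σ : ℝ}

theorem large_bound_le_max {r : ℕ} {e : ℝ} (hK : 0 < K) (hlam : 0 < lam) (hmu : 0 < mu)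
    (hP : σ * n ≤ P) (he0 : 0 ≤ e) (hmuK : 2 ≤ mu * K) (hr : r ≤ n / 2)
    (hx : 8 ≤ lam * σ * mu * (n * e)) :
    Real.exp (-(lam / 2 * e * r)) + (if r ≤ rn n K P then 0 else Real.exp (-(mu * K))) ≤
      max (Real.exp (-(lam / 8 * e * r))) (Real.exp (-(mu / 2 * K))) := by
  rw [show lam / 8 * e * r = lam / 2 * e * r / 4 by ring,
    show mu / 2 * K = mu * K / 2 by ring]
  split_ifs with hrn
  · rw [add_zero]
    refine le_max_of_le_left (Real.exp_le_exp.2 (neg_le_neg ?_))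
    exact div_le_self (by positivity) (by norm_num)
  · refine exp_neg_add_le_max hmuK ?_
    have hrK : (P : ℝ) ≤ r * K := by
      have h : P / K < r := by
        rw [rn, le_min_iff, not_and_or] at hrn
        omega
      exact_mod_cast ((Nat.div_lt_iff_lt_mul hK).1 h).le
    calc Real.exp (-(mu * K)) ≤ (mu * K)⁻¹ := by
          rw [Real.exp_neg]
          exact inv_anti₀ (by linarith) (by linarith [Real.add_one_le_exp (mu * K)])
      _ ≤ lam / 2 * e * r / 4 := by
        rw [inv_le_iff_one_le_mul₀ (by linarith)]
        have h := mul_le_mul_of_nonneg_left (hP.trans hrK) (by positivity : 0 ≤ lam * mu * e)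
        linarith

theorem sum_le_of_small_of_large {s : Finset ℕ} {f : ℕ → ℝ} {M x : ℝ} (hM : 0 ≤ M)
    (hs : #s ≤ Real.exp x) (hsmall : ∀ r ∈ s, r ≤ R → f r ≤ M)
    (hlarge : ∀ r ∈ s, R < r → f r ≤ Real.exp (-(2 * x))) :
    ∑ r ∈ s, f r ≤ (R + 1) * M + Real.exp (-x) := by
  rw [← sum_filter_add_sum_filter_not s (· ≤ R)]
  refine add_le_add ((sum_le_card_nsmul _ _ M fun r hr => ?_).trans ?_)
    ((sum_le_card_nsmul _ _ (Real.exp (-(2 * x))) fun r hr => ?_).trans ?_)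
  · exact hsmall r (mem_filter.1 hr).1 (mem_filter.1 hr).2
  · have hcard : #{r ∈ s | r ≤ R} ≤ R + 1 := by
      refine (card_le_card fun r hr => ?_).trans_eq (card_range (R + 1))
      exact mem_range.2 (Nat.lt_succ_of_le (mem_filter.1 hr).2)
    rw [nsmul_eq_mul]
    exact mul_le_mul_of_nonneg_right (by exact_mod_cast hcard) hM
  · exact hlarge r (mem_filter.1 hr).1 (not_le.1 (mem_filter.1 hr).2)
  · rw [nsmul_eq_mul]
    calc (#{r ∈ s | ¬r ≤ R} : ℝ) * Real.exp (-(2 * x))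
        ≤ Real.exp x * Real.exp (-(2 * x)) := by
          gcongr
          exact (Nat.cast_le.2 (card_filter_le _ _)).trans hs
      _ = Real.exp (-x) := by
          rw [← Real.exp_add]
          congr 1
          ring

theorem gonMeasure_real_vertexConn_eq_le_of_large_mean (hp0 : 0 ≤ p) (hp1 : p ≤ 1)
    (hK : 0 < K) (hKP : K ≤ P) (hε0 : 0 ≤ ε) (hε1 : ε ≤ 1) (hlam0 : 0 < lam) (hlam1 : lam ≤ 1)
    (hmu : 0 < mu) (hP : σ * n ≤ P) (hn4 : 4 ≤ n) (hn6 : 6 * ℓ ≤ n) (hℓR : ℓ ≤ R)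
    (hR : 144 ≤ lam * R)
    (hn : n ≤ Real.exp (n * pef K P p)) (hx1 : 1 ≤ n * pef K P p) (hmuK : 2 ≤ mu * K)
    (hx8 : 8 ≤ lam * σ * mu * (n * pef K P p))
    (hlogx : Real.log (treeCountBase ℓ * (n * pef K P p)) ≤ lam / 96 * (n * pef K P p))
    (hlogK : Real.log (treeCountBase ℓ * (n * pef K P p)) + 3 ≤ mu / 2 * K / 3) :
    (gonMeasure n K P p).real ({ω | vertexConn (gonGraph ω) = ℓ} ∩
        {ω | ℓ < minDeg (gonGraph ω)} ∩ (EJ n K P ε lam mu)ᶜ) ≤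
      (R + 1) * (Real.exp (2 * (R + ℓ)) * ((treeCountBase ℓ * (n * pef K P p)) ^ (R + ℓ) *
        Real.exp (-(ε / 24 * (n * pef K P p))))) + Real.exp (-(n * pef K P p)) := by
  have he0 : 0 ≤ pef K P p := pef_nonneg hp0 K P
  have he1 : pef K P p ≤ 1 := pef_le_one hp1 K P
  have hA : 1 ≤ treeCountBase ℓ * (n * pef K P p) :=
    one_le_mul_of_one_le_of_one_le (one_le_treeCountBase ℓ) hx1
  let b (r : ℕ) : ℝ := if r ≤ R then Real.exp (-((1 + ε / 24) * pef K P p))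
    else max (Real.exp (-(lam / 8 * pef K P p * r))) (Real.exp (-(mu / 2 * K)))
  have hb0 (r) : 0 ≤ b r := by
    simp only [b]
    split_ifs <;> positivity
  refine (gonMeasure_real_vertexConn_eq_le hp0 hp1 (by omega) hb0 fun T θ hT hTn hθ => ?_).trans
    (sum_le_of_small_of_large (by positivity) ?_ (fun r hr hrR => ?_) fun r hr hrR => ?_)
  · simp only [b]
    split_ifs
    · exact isolationProb_le_exp_of_two_le_card hp0 hp1 hK hKP hn4 hε0 hε1 hT hθ
    · exact (isolationProb_le_of_goodRings hp0 hp1 hK hKP hlam0.le hlam1 hθ).trans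
        (large_bound_le_max hK hlam0 hmu hP he0 hmuK hTn hx8)
  · refine le_trans ?_ hn
    rw [Nat.card_Icc]
    exact_mod_cast (by omega : n / 2 + 1 - 2 ≤ n)
  all_goals
    rw [← mul_assoc]
    refine (mul_le_mul_of_nonneg_right (choose_mul_choose_mul_pow_le ℓ hx1
      (one_le_two.trans (mem_Icc.1 hr).1)) (pow_nonneg (hb0 r) _)).trans ?_
  · simp only [b, if_pos hrR]
    exact small_term_le hn hrR hA he0 he1 (by linarith) (by linarith)
  · simp only [b, if_neg hrR.not_ge]
    exact large_term_le hn hrR.le hℓR (mem_Icc.1 hr).2 hn6 hA he0 he1 hlam0.le hR hlogx hlogK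

theorem mul_le_keyRing_sq (hp1 : p ≤ 1) (hσ : 0 < σ) (hK : 0 < K) (hKP : K ≤ P)
    (hP : σ * n ≤ P) : σ * (n * pef K P p) ≤ (K : ℝ) ^ 2 := by
  have hP0 : (0 : ℝ) < P := Nat.cast_pos.2 (hK.trans_le hKP)
  have he : pef K P p ≤ K * K / P :=
    (mul_le_of_le_one_left (psf_nonneg K P) hp1).trans (psf_le_sq_div hKP)
  calc σ * (n * pef K P p) ≤ σ * (n * (K * K / P)) := by gcongr
    _ = σ * n * (K ^ 2 / P) := by ring
    _ ≤ P * (K ^ 2 / P) := by gcongr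
    _ = K ^ 2 := mul_div_cancel₀ _ hP0.ne'

theorem eventually_large_mean (ℓ : ℕ) (hσ : 0 < σ) (hlam : 0 < lam) (hmu : 0 < mu) :
    ∀ᶠ x : ℝ in atTop, 8 ≤ lam * σ * mu * x ∧
      Real.log (treeCountBase ℓ * x) ≤ lam / 96 * x ∧ 2 ≤ mu * √(σ * x) ∧
      Real.log (treeCountBase ℓ * x) + 3 ≤ mu / 2 * √(σ * x) / 3 := by
  have hC : 0 < treeCountBase ℓ := one_pos.trans_le (one_le_treeCountBase ℓ)
  have hlin : Tendsto (fun x : ℝ => lam * σ * mu * x) atTop atTop :=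
    tendsto_id.const_mul_atTop (by positivity)
  have hsqrt : Tendsto (fun x : ℝ => mu * √(σ * x)) atTop atTop :=
    (Real.tendsto_sqrt_atTop.comp (tendsto_id.const_mul_atTop hσ)).const_mul_atTop hmu
  filter_upwards [hlin.eventually_ge_atTop 8, hsqrt.eventually_ge_atTop 2,
    eventually_log_mul_add_le_mul_sqrt 0 hC (by positivity : 0 < lam / 96),
    eventually_log_mul_add_le_mul_sqrt 3 hC (by positivity : 0 < mu / 6 * √σ),
    eventually_ge_atTop 1] with x hx8 hx2 hlogx hlogK hx1
  refine ⟨hx8, ?_, hx2, ?_⟩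
  · refine (add_zero (Real.log _) ▸ hlogx).trans ?_
    gcongr
    exact Real.sqrt_le_self_iff.2 (Or.inr hx1)
  · rw [Real.sqrt_mul hσ.le]
    linarith

theorem EJ_mono {ε' lam' : ℝ} (hε : ε' ≤ ε) (hlam : lam' ≤ lam) :
    EJ n K P ε' lam' mu ⊆ EJ n K P ε lam mu := by
  rintro ω ⟨T, hT, hTJ⟩
  refine ⟨T, hT, hTJ.trans ?_⟩
  unfold Jarr
  split_ifs
  · exact max_le_max (Nat.floor_mono (by gcongr)) (Nat.floor_mono (by gcongr))
  · exact le_rfl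

theorem pos_of_mul_pef_pos (hKP : K ≤ P) (hx : 0 < n * pef K P p) : 0 < K := by
  refine Nat.pos_of_ne_zero fun hK => hx.ne' ?_
  have hpsf : psf K P = 0 :=
    le_antisymm (by simpa only [hK, Nat.cast_zero, zero_mul, zero_div] using psf_le_sq_div hKP)
      (psf_nonneg K P)
  rw [pef, hpsf, mul_zero, mul_zero]

end Asymptotics

section Limit

variable {ℓ : ℕ} {K P : ℕ → ℕ} {p : ℕ → ℝ} {σ ε lam mu : ℝ}

theorem tendsto_mul_pef_atTop
    (hedge : ∀ᶠ n : ℕ in atTop, Real.log n ≤ n * pef (K n) (P n) (p n)) :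
    Tendsto (fun n : ℕ => n * pef (K n) (P n) (p n)) atTop atTop :=
  tendsto_atTop_mono' atTop hedge (Real.tendsto_log_atTop.comp tendsto_natCast_atTop_atTop)

theorem eventually_gonMeasure_real_vertexConn_eq_le {R : ℕ} (hσ : 0 < σ) (hKP : ∀ n, K n ≤ P n)
    (hp0 : ∀ n, 0 ≤ p n) (hp1 : ∀ n, p n ≤ 1) (hP : ∀ᶠ n : ℕ in atTop, σ * n ≤ P n)
    (hedge : ∀ᶠ n : ℕ in atTop, Real.log n ≤ n * pef (K n) (P n) (p n))
    (hε0 : 0 ≤ ε) (hε1 : ε ≤ 1) (hlam0 : 0 < lam) (hlam1 : lam ≤ 1) (hmu : 0 < mu)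
    (hℓR : ℓ ≤ R) (hR : 144 ≤ lam * R) :
    ∀ᶠ n : ℕ in atTop, (gonMeasure n (K n) (P n) (p n)).real
        ({ω | vertexConn (gonGraph ω) = ℓ} ∩ {ω | ℓ < minDeg (gonGraph ω)} ∩
          (EJ n (K n) (P n) ε lam mu)ᶜ) ≤
      (R + 1) * (Real.exp (2 * (R + ℓ)) *
        ((treeCountBase ℓ * (n * pef (K n) (P n) (p n))) ^ (R + ℓ) *
          Real.exp (-(ε / 24 * (n * pef (K n) (P n) (p n)))))) +
        Real.exp (-(n * pef (K n) (P n) (p n))) := by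
  have hx := tendsto_mul_pef_atTop hedge
  filter_upwards [hP, hedge, hx.eventually_ge_atTop 1,
    hx.eventually (eventually_large_mean ℓ hσ hlam0 hmu), eventually_ge_atTop 4,
    eventually_ge_atTop (6 * ℓ)] with n hP hedge hx1 ⟨hx8, hlogx, hsqrt, hlogsqrt⟩ hn4 hn6
  have hK : 0 < K n := pos_of_mul_pef_pos (hKP n) (one_pos.trans_le hx1)
  have hsqrtK : √(σ * (n * pef (K n) (P n) (p n))) ≤ K n :=
    Real.sqrt_le_iff.2 ⟨Nat.cast_nonneg _, mul_le_keyRing_sq (hp1 n) hσ hK (hKP n) hP⟩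
  have hn : (n : ℝ) ≤ Real.exp (n * pef (K n) (P n) (p n)) :=
    (Real.log_le_iff_le_exp (by positivity)).1 hedge
  exact gonMeasure_real_vertexConn_eq_le_of_large_mean (hp0 n) (hp1 n) hK (hKP n) hε0 hε1 hlam0
    hlam1 hmu hP hn4 hn6 hℓR hR hn hx1 (hsqrt.trans (by gcongr)) hx8 hlogx
    (hlogsqrt.trans (by gcongr))

theorem tendsto_gonMeasure_real_vertexConn_eq (hσ : 0 < σ) (hKP : ∀ n, K n ≤ P n)
    (hp0 : ∀ n, 0 ≤ p n) (hp1 : ∀ n, p n ≤ 1) (hP : ∀ᶠ n : ℕ in atTop, σ * n ≤ P n)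
    (hedge : ∀ᶠ n : ℕ in atTop, Real.log n ≤ n * pef (K n) (P n) (p n))
    (hε0 : 0 < ε) (hε1 : ε ≤ 1) (hlam0 : 0 < lam) (hlam1 : lam ≤ 1) (hmu : 0 < mu) :
    Tendsto (fun n : ℕ => (gonMeasure n (K n) (P n) (p n)).real
      ({ω | vertexConn (gonGraph ω) = ℓ} ∩ {ω | ℓ < minDeg (gonGraph ω)} ∩
        (EJ n (K n) (P n) ε lam mu)ᶜ)) atTop (𝓝 0) := by
  obtain ⟨R, hR⟩ := exists_nat_ge (max (ℓ : ℝ) (144 / lam))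
  have hℓR : ℓ ≤ R := Nat.cast_le.1 ((le_max_left _ _).trans hR)
  have hlamR : 144 ≤ lam * R := (div_le_iff₀' hlam0).1 ((le_max_right _ _).trans hR)
  have hexp (a : ℝ) := tendsto_const_mul_pow_mul_exp_neg a (treeCountBase ℓ) (R + ℓ)
    (by positivity : 0 < ε / 24)
  have hbound := (((hexp (Real.exp (2 * (R + ℓ)))).const_mul ((R : ℝ) + 1)).add
    Real.tendsto_exp_neg_atTop_nhds_zero).comp (tendsto_mul_pef_atTop hedge)
  rw [mul_zero, add_zero] at hbound
  exact squeeze_zero' (.of_forall fun n => measureReal_nonneg)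
    (eventually_gonMeasure_real_vertexConn_eq_le hσ hKP hp0 hp1 hP hedge hε0.le hε1 hlam0 hlam1
      hmu hℓR hlamR) hbound

theorem eventually_log_le_of_eq {β x : ℕ → ℝ} (hβ : ∀ n : ℕ, β n =
    x n - Real.log n - ℓ * Real.log (Real.log n)) (hβtop : Tendsto β atTop atTop) :
    ∀ᶠ n : ℕ in atTop, Real.log n ≤ x n := by
  have hlog : Tendsto (fun n : ℕ => Real.log n) atTop atTop :=
    Real.tendsto_log_atTop.comp tendsto_natCast_atTop_atTop
  filter_upwards [hβtop.eventually_ge_atTop 0, hlog.eventually_ge_atTop 1] with n hβ0 hlog1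
  have hloglog : 0 ≤ ℓ * Real.log (Real.log n) :=
    mul_nonneg ℓ.cast_nonneg (Real.log_nonneg hlog1)
  linarith [hβ n]

end Limit

theorem gon_conn_eq_ell_min_deg_gt_ell_negligible_general
    (ℓ : ℕ) (K P : ℕ → ℕ) (p : ℕ → ℝ) (σ : ℝ) (hσ : 0 < σ)
    (hKP : ∀ n, K n ≤ P n) (hp0 : ∀ n, 0 ≤ p n) (hp1 : ∀ n, p n ≤ 1)
    (hP : ∀ᶠ n : ℕ in atTop, σ * (n : ℝ) ≤ (P n : ℝ))
    (hedge : ∀ᶠ n : ℕ in atTop, Real.log n ≤ n * pef (K n) (P n) (p n))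
    (ε lam mu : ℝ) (hε : 0 < ε) (hlam : 0 < lam) (hmu : 0 < mu) :
    Tendsto (fun n : ℕ => gonMeasure n (K n) (P n) (p n)
      ({ω | vertexConn (gonGraph ω) = ℓ} ∩ {ω | ℓ < minDeg (gonGraph ω)} ∩
        (EJ n (K n) (P n) ε lam mu)ᶜ)) atTop (𝓝 0) := by
  rw [← ENNReal.tendsto_toReal_zero_iff fun n => measure_ne_top _ _]
  refine squeeze_zero (fun n => measureReal_nonneg) (fun n => measureReal_mono ?_)
    (tendsto_gonMeasure_real_vertexConn_eq hσ hKP hp0 hp1 hP hedge (lt_min hε one_pos)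
      (min_le_right ε 1) (lt_min hlam one_pos) (min_le_right lam 1) hmu)
  exact Set.inter_subset_inter_right _
    (Set.compl_subset_compl.2 (EJ_mono (min_le_left ε 1) (min_le_left lam 1)))

/-- off `𝓔(J)`, connectivity exactly `ℓ` together with minimum
degree greater than `ℓ` is asymptotically negligible. -/
theorem gon_conn_eq_ell_min_deg_gt_ell_negligible
    (ℓ : ℕ) (K P : ℕ → ℕ) (p : ℕ → ℝ) (σ : ℝ) (hσ : 0 < σ)
    (hKP : ∀ n, K n ≤ P n) (hp0 : ∀ n, 0 < p n) (hp1 : ∀ n, p n < 1)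
    (hK2 : ∀ᶠ n : ℕ in atTop, 2 ≤ K n)
    (hP : ∀ᶠ n : ℕ in atTop, σ * (n : ℝ) ≤ (P n : ℝ))
    (hKPo : Tendsto (fun n : ℕ => (K n : ℝ) / (P n : ℝ)) atTop (nhds 0))
    (β : ℕ → ℝ)
    (hβ : ∀ n : ℕ, β n =
      (n : ℝ) * pef (K n) (P n) (p n) - Real.log n - (ℓ : ℝ) * Real.log (Real.log n))
    (hβo : Tendsto (fun n : ℕ => β n / Real.log n) atTop (nhds 0))
    (hβtop : Tendsto β atTop atTop)
    (ε lam mu : ℝ) (hε0 : 0 < ε) (hε1 : ε < 1)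
    (hlam0 : 0 < lam) (hlam2 : lam < 1 / 2)
    (hlamA : 2 * lam * σ < 1)
    (hlamB : lam * (Real.exp 2 / σ) ^ (lam / (1 - 2 * lam)) < 1)
    (hmu0 : 0 < mu) (hmu2 : mu < 1 / 2)
    (hmuA : 2 * (Real.sqrt mu * (Real.exp 1 / mu) ^ mu) ^ σ < 1)
    (hmuB : Real.sqrt mu * (Real.exp 1 / mu) ^ mu < 1) :
    Tendsto (fun n : ℕ => gonMeasure n (K n) (P n) (p n)
        ({ω | vertexConn (gonGraph ω) = ℓ} ∩ {ω | ℓ < minDeg (gonGraph ω)} ∩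
          (EJ n (K n) (P n) ε lam mu)ᶜ)) atTop (nhds 0) :=
  gon_conn_eq_ell_min_deg_gt_ell_negligible_general ℓ K P p σ hσ hKP (fun n => (hp0 n).le)
    (fun n => (hp1 n).le) hP (eventually_log_le_of_eq hβ hβtop) ε lam mu hε0 hlam0 hmu0
end
end

section
/- Let S_x and S_y be two independent key rings, each uniformly distributed over the K_n-element subsets of a key pool of size P_n, and suppose P_n ≥ 2·K_n. Then for every integer u with 0 ≤ u ≤ K_n: P[|S_x ∩ S_y| = u] ≤ (1/u!)·(K_n²/(P_n − K_n))^u. -/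
open MeasureTheory Filter Asymptotics
open scoped ENNReal

noncomputable section

/-!
Replace the event `|S_x ∩ S_y| = u` by `u ≤ |S_x ∩ S_y|` and condition on `S_x`. The latter event
occurs when `S_y` contains one of the `K.choose u` subsets `U ⊆ S_x` of size `u`. Sampling without
replacement makes each containment have probability
`(K / P) * ((K - 1) / (P - 1)) * ⋯ ≤ (K / P) ^ u`, so the union bound gives at most
`K.choose u * (K / P) ^ u ≤ (K ^ 2 / P) ^ u / u!`, and `K ^ 2 / P ≤ K ^ 2 / (P - K)`.
-/

theorem choose_sub_mul_pow_le {n k u : ℕ} (hkn : k ≤ n) (huk : u ≤ k) :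
    (n - u).choose (k - u) * n ^ u ≤ n.choose k * k ^ u := by
  induction u with
  | zero => simp
  | succ u ih =>
    have absorb : (n - u) * (n - (u + 1)).choose (k - (u + 1)) =
        (n - u).choose (k - u) * (k - u) := by
      obtain ⟨hn, hk⟩ : n - u = n - (u + 1) + 1 ∧ k - u = k - (u + 1) + 1 := by omega
      rw [hn, hk, Nat.add_one_mul_choose_eq]
    have cross : (k - u) * n ≤ k * (n - u) := by
      rw [Nat.sub_mul, Nat.mul_sub, Nat.mul_comm k u]
      exact Nat.sub_le_sub_left (Nat.mul_le_mul_left u hkn) _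
    refine Nat.le_of_mul_le_mul_left ?_ (by omega : 0 < n - u)
    calc (n - u) * ((n - (u + 1)).choose (k - (u + 1)) * n ^ (u + 1))
        = (n - u).choose (k - u) * n ^ u * ((k - u) * n) := by
          rw [← mul_assoc, absorb, pow_succ]; ring
      _ ≤ n.choose k * k ^ u * (k * (n - u)) := Nat.mul_le_mul (ih (by omega)) cross
      _ = (n - u) * (n.choose k * k ^ (u + 1)) := by ring

theorem sq_div_le_sq_div_sub {F : Type*} [Field F] [LinearOrder F] [IsStrictOrderedRing F]
    {a b : F} (ha : 0 ≤ a) (hab : 2 * a ≤ b) :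
    a ^ 2 / b ≤ a ^ 2 / (b - a) := by
  rcases ha.eq_or_lt with rfl | ha
  · simp
  · exact div_le_div_of_nonneg_left (sq_nonneg a) (by linarith) (by linarith)

theorem prod_apply_le_of_forall_section_le {α β : Type*} [MeasurableSpace α] [MeasurableSpace β]
    {μ : Measure α} [IsProbabilityMeasure μ] {ν : Measure β} [SFinite ν] {s : Set (α × β)}
    (hs : MeasurableSet s) {c : ℝ≥0∞} (hc : ∀ x, ν (Prod.mk x ⁻¹' s) ≤ c) :
    μ.prod ν s ≤ c :=
  calc μ.prod ν s = ∫⁻ x, ν (Prod.mk x ⁻¹' s) ∂μ := Measure.prod_apply hs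
    _ ≤ ∫⁻ _, c ∂μ := lintegral_mono hc
    _ = c := by rw [lintegral_const, measure_univ, mul_one]

section KeyRing

variable {P K : ℕ}

instance : DiscreteMeasurableSpace (KeyRing P K) :=
  ⟨fun _ => MeasurableSpace.measurableSet_top⟩

theorem card_keyRing_superset (U : Finset (Fin P)) (hU : U.card ≤ K) :
    (Finset.univ.filter fun t : KeyRing P K => U ⊆ t.1).card =
      (P - U.card).choose (K - U.card) := by
  have himage : (Finset.univ.filter fun t : KeyRing P K => U ⊆ t.1).map
      (Function.Embedding.subtype _) =
        (Finset.univ.powersetCard K).filter (U ⊆ ·) := by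
    ext t
    simp [and_comm]
  rw [← Finset.card_map, himage,
    Finset.card_filter_powersetCard_subset _ _ _ U.subset_univ hU, Finset.card_univ,
    Fintype.card_fin]

theorem uniformKeyMeasure_eq_uniformOn :
    uniformKeyMeasure P K = ProbabilityTheory.uniformOn Set.univ := by
  ext s
  rw [ProbabilityTheory.uniformOn_univ, uniformKeyMeasure, Measure.smul_apply, smul_eq_mul,
    ENNReal.div_eq_inv_mul]

theorem isProbabilityMeasure_uniformKeyMeasure (hKP : K ≤ P) :
    IsProbabilityMeasure (uniformKeyMeasure P K) := by
  obtain ⟨s, -, hs⟩ := Finset.exists_subset_card_eq (s := (Finset.univ : Finset (Fin P)))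
    (by simpa using hKP)
  rw [uniformKeyMeasure_eq_uniformOn]
  exact ProbabilityTheory.isProbabilityMeasure_uniformOn Set.finite_univ ⟨⟨s, hs⟩, Set.mem_univ _⟩

theorem uniformKeyMeasure_real_superset (U : Finset (Fin P)) (hU : U.card ≤ K) :
    (uniformKeyMeasure P K).real {t | U ⊆ t.1} =
      (P - U.card).choose (K - U.card) / P.choose K := by
  have hcoe : {t : KeyRing P K | U ⊆ t.1} =
      (Finset.univ.filter fun t : KeyRing P K => U ⊆ t.1 : Finset (KeyRing P K)) := by
    simp
  rw [measureReal_def, uniformKeyMeasure_eq_uniformOn, ProbabilityTheory.uniformOn_univ, hcoe,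
    Measure.count_apply_finset, card_keyRing_superset U hU, Fintype.card_finset_len,
    Fintype.card_fin, ENNReal.toReal_div, ENNReal.toReal_natCast, ENNReal.toReal_natCast]

theorem uniformKeyMeasure_real_superset_le (hKP : K ≤ P) (U : Finset (Fin P)) :
    (uniformKeyMeasure P K).real {t | U ⊆ t.1} ≤ ((K : ℝ) / P) ^ U.card := by
  rcases lt_or_ge K U.card with hKU | hUK
  · have hempty : {t : KeyRing P K | U ⊆ t.1} = ∅ :=
      Set.eq_empty_of_forall_notMem fun t hUt =>
        hKU.not_ge ((Finset.card_le_card hUt).trans_eq t.2)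
    rw [hempty, measureReal_empty]
    positivity
  · have hchoose : (0 : ℝ) < P.choose K := by exact_mod_cast Nat.choose_pos hKP
    have hpow : (0 : ℝ) < (P : ℝ) ^ U.card := by
      exact_mod_cast Nat.pow_pos_iff.2 (by omega : 0 < P ∨ U.card = 0)
    rw [uniformKeyMeasure_real_superset U hUK, div_pow, div_le_div_iff₀ hchoose hpow,
      mul_comm ((K : ℝ) ^ U.card)]
    exact_mod_cast choose_sub_mul_pow_le hKP hUK

theorem uniformKeyMeasure_real_le_card_inter_le (hKP : K ≤ P) (A : Finset (Fin P)) (u : ℕ) :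
    (uniformKeyMeasure P K).real {t | u ≤ (A ∩ t.1).card} ≤
      (1 / (u.factorial : ℝ)) * ((A.card : ℝ) * K / P) ^ u := by
  have := isProbabilityMeasure_uniformKeyMeasure hKP
  have hcover : {t : KeyRing P K | u ≤ (A ∩ t.1).card} ⊆
      ⋃ U ∈ A.powersetCard u, {t | U ⊆ t.1} := fun t ht => by
    obtain ⟨U, hU, hcard⟩ := Finset.exists_subset_card_eq ht
    exact Set.mem_biUnion (Finset.mem_powersetCard.2 ⟨(Finset.subset_inter_iff.1 hU).1, hcard⟩)
      (Finset.subset_inter_iff.1 hU).2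
  calc (uniformKeyMeasure P K).real {t | u ≤ (A ∩ t.1).card}
      ≤ (uniformKeyMeasure P K).real (⋃ U ∈ A.powersetCard u, {t | U ⊆ t.1}) :=
        measureReal_mono hcover (measure_ne_top _ _)
    _ ≤ ∑ U ∈ A.powersetCard u, (uniformKeyMeasure P K).real {t | U ⊆ t.1} :=
        measureReal_biUnion_finset_le _ _
    _ ≤ ∑ _U ∈ A.powersetCard u, ((K : ℝ) / P) ^ u :=
        Finset.sum_le_sum fun U hU =>
          (Finset.mem_powersetCard.1 hU).2 ▸ uniformKeyMeasure_real_superset_le hKP U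
    _ = A.card.choose u * ((K : ℝ) / P) ^ u := by
        rw [Finset.sum_const, Finset.card_powersetCard, nsmul_eq_mul]
    _ ≤ (A.card : ℝ) ^ u / u.factorial * ((K : ℝ) / P) ^ u := by
        gcongr
        exact Nat.choose_le_pow_div u A.card
    _ = (1 / (u.factorial : ℝ)) * ((A.card : ℝ) * K / P) ^ u := by
        rw [mul_div_assoc, mul_pow]
        ring

end KeyRing

theorem keyring_overlap_bound_general {P K L : ℕ} (hKP : K ≤ P) (hLP : L ≤ P) (u : ℕ) :
    ((uniformKeyMeasure P K).prod (uniformKeyMeasure P L))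
        {s : KeyRing P K × KeyRing P L | u ≤ (s.1.1 ∩ s.2.1).card} ≤
      ENNReal.ofReal ((1 / (u.factorial : ℝ)) * ((K : ℝ) * L / P) ^ u) := by
  have := isProbabilityMeasure_uniformKeyMeasure hKP
  have := isProbabilityMeasure_uniformKeyMeasure hLP
  refine prod_apply_le_of_forall_section_le MeasurableSet.of_discrete fun s => ?_
  calc uniformKeyMeasure P L {t | u ≤ (s.1 ∩ t.1).card}
      = ENNReal.ofReal ((uniformKeyMeasure P L).real {t | u ≤ (s.1 ∩ t.1).card}) :=
        (ofReal_measureReal (measure_ne_top _ _)).symm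
    _ ≤ ENNReal.ofReal ((1 / (u.factorial : ℝ)) * ((s.1.card : ℝ) * L / P) ^ u) :=
        ENNReal.ofReal_le_ofReal (uniformKeyMeasure_real_le_card_inter_le hLP s.1 u)
    _ = ENNReal.ofReal ((1 / (u.factorial : ℝ)) * ((K : ℝ) * L / P) ^ u) := by rw [s.2]

/-- bound on the probability that two key rings share exactly
`u` keys. -/
theorem keyring_overlap_bound
    (K P u : ℕ) (h2 : 2 * K ≤ P) (hu : u ≤ K) :
    ((uniformKeyMeasure P K).prod (uniformKeyMeasure P K))
        {s : KeyRing P K × KeyRing P K | (s.1.1 ∩ s.2.1).card = u} ≤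
      ENNReal.ofReal
        ((1 / (u.factorial : ℝ)) * ((K : ℝ) ^ 2 / ((P : ℝ) - (K : ℝ))) ^ u) := by
  refine (measure_mono fun _ hs => hs.ge).trans
    ((keyring_overlap_bound_general (by omega) (by omega) u).trans ?_)
  rw [← sq]
  gcongr ENNReal.ofReal (_ * ?_ ^ u)
  exact sq_div_le_sq_div_sub K.cast_nonneg (by exact_mod_cast h2)
end
end
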